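/- arXiv:2405.17107 — 2 statements merged into one kernel-verified Lean document; each statement's English description precedes it below -/
import Mathlib

section
/- Let 1 ≤ m ≤ d. There exists a set M of C² functions from ℝ^d to ℝ^m that is a countable intersection of open dense subsets (a G_δ set) of C²(ℝ^d, ℝ^m) endowed with the topology of C² convergence, such that for every f ∈ M and every compact set K ⊂ ℝ^d, the critical set Σ_f = {x ∈ ℝ^d : rank(Df(x)) ≤ m−1} satisfies H^{d−1}(Σ_f ∩ K) < +∞. -/
open MeasureTheory Set Topology
open scoped ENNReal

noncomputable section

abbrev E (n : ℕ) : Type := EuclideanSpace ℝ (Fin n)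

def unitCube (d : ℕ) : Set (E d) := {x | ∀ i, x i ∈ Set.Icc (0:ℝ) 1}

def openCube (d : ℕ) : Set (E d) := {x | ∀ i, x i ∈ Set.Ioo (0:ℝ) 1}

/-- Jacobian matrix of `f` at `x`. -/
def jac {d m : ℕ} (f : E d → E m) (x : E d) : Matrix (Fin m) (Fin d) ℝ :=
  Matrix.of fun i j => fderiv ℝ f x (EuclideanSpace.single j 1) i

/-- Critical set of `g` in the open unit cube. -/
def critSet {d m : ℕ} (g : E d → E m) : Set (E d) :=
  {x ∈ openCube d | (jac g x).rank ≤ m - 1}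

/-- `N_f(ε)`. -/
def Nf {d m : ℕ} (f : E d → E m) (ε : ℝ) : ℝ≥0∞ :=
  sInf { h : ℝ≥0∞ | ∃ g : E d → E m, ContDiff ℝ 1 g ∧
    (∀ x ∈ unitCube d, ‖g x - f x‖ ≤ ε ∧ ‖fderiv ℝ g x - fderiv ℝ f x‖ ≤ ε) ∧
    h = μH[(d:ℝ) - 1] (critSet g) }

/-- minimal modulus of continuity of `Df` on `U`. -/
def omegaC1 {d m : ℕ} (f : E d → E m) (U : Set (E d)) (δ : ℝ) : ℝ :=
  sSup {r : ℝ | ∃ x ∈ U, ∃ y ∈ U, ‖x - y‖ ≤ δ ∧ r = ‖fderiv ℝ f x - fderiv ℝ f y‖}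

def betaf {d m : ℕ} (f : E d → E m) (δ : ℝ) : ℝ :=
  omegaC1 f (unitCube d) (Real.sqrt d * δ) *
    (1 + Real.sqrt d * δ + 4 * (d:ℝ) ^ ((d:ℝ) + 1/2) * ((d:ℝ)+1)^4)

end

noncomputable section

open UniformOnFun

/-- The space of `C²` maps `ℝ^d → ℝ^m`. -/
abbrev C2Maps (d m : ℕ) : Type := {f : E d → E m // ContDiff ℝ 2 f}

/-- The topology of `C²` convergence on `C2Maps d m`: the topology induced by
uniform convergence of `f`, `Df` and `D²f` on compact subsets of `ℝ^d`. -/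
def c2Topology (d m : ℕ) : TopologicalSpace (C2Maps d m) :=
  TopologicalSpace.induced
    (fun f =>
      UniformOnFun.ofFun {K : Set (E d) | IsCompact K}
        (fun x => (f.1 x, fderiv ℝ f.1 x, fderiv ℝ (fderiv ℝ f.1) x)))
    (UniformOnFun.topologicalSpace (E d)
      (E m × (E d →L[ℝ] E m) × (E d →L[ℝ] (E d →L[ℝ] E m)))
      {K : Set (E d) | IsCompact K})

open Filter


/-- local finiteness at a regular zero -/
lemma local_finite {X Y W : Type} [NormedAddCommGroup X] [NormedSpace ℝ X] [FiniteDimensional ℝ X]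
    [NormedAddCommGroup Y] [NormedSpace ℝ Y] [FiniteDimensional ℝ Y]
    [NormedAddCommGroup W] [NormedSpace ℝ W] [MeasurableSpace W] [BorelSpace W]
    (G : X → Y) (G' : X →L[ℝ] Y) (z : X) (hG : HasStrictFDerivAt G G' z) (hs : G'.range = ⊤)
    (hz : G z = 0) (k : ℕ) (hk : Module.finrank ℝ X = Module.finrank ℝ Y + k) (π : X →L[ℝ] W) :
    ∃ V ∈ 𝓝 z, μH[(k:ℝ)] (π '' (V ∩ {x | G x = 0})) < ⊤ := by
  have : CompleteSpace X := FiniteDimensional.complete ℝ X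
  have hker : Module.finrank ℝ G'.ker = k := by
    have h := LinearMap.finrank_range_add_finrank_ker (G' : X →ₗ[ℝ] Y)
    have h2 : Module.finrank ℝ (LinearMap.range (G' : X →ₗ[ℝ] Y)) = Module.finrank ℝ Y := by
      have : LinearMap.range (G' : X →ₗ[ℝ] Y) = ⊤ := hs
      rw [this]; exact finrank_top ℝ Y
    have h3 : Module.finrank ℝ (LinearMap.ker (G' : X →ₗ[ℝ] Y)) = k := by omega
    exact h3
  have hψ := hG.to_implicitFunction hs
  set ψ := hG.implicitFunction G G' hs with hψd
  set e := hG.implicitToOpenPartialHomeomorph G G' hs with he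
  have hψ2 : HasStrictFDerivAt (fun y => π (ψ (G z) y)) (π.comp G'.ker.subtypeL) 0 :=
    (π.hasStrictFDerivAt).comp (0 : G'.ker) hψ
  obtain ⟨C, s, hs0, hL⟩ := hψ2.exists_lipschitzOnWith
  have hcont : ContinuousAt (fun x => (e x).2) z := by
    have := e.continuousAt (hG.mem_implicitToOpenPartialHomeomorph_source hs)
    exact continuous_snd.continuousAt.comp this
  have hez : (e z).2 = 0 := by
    rw [he, hG.implicitToOpenPartialHomeomorph_self hs]
  have ev1 : ∀ᶠ x in 𝓝 z, (e x).2 ∈ s ∩ Metric.closedBall 0 1 := by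
    apply hcont.eventually
    change s ∩ Metric.closedBall 0 1 ∈ 𝓝 (e z).2
    rw [hez]
    exact Filter.inter_mem hs0 (Metric.closedBall_mem_nhds _ one_pos)
  have ev2 := hG.eq_implicitFunction hs
  refine ⟨{x | (e x).2 ∈ s ∩ Metric.closedBall 0 1 ∧ ψ (G x) (e x).2 = x}, ev1.and ev2, ?_⟩
  let _ : MeasurableSpace G'.ker := borel _
  have : BorelSpace G'.ker := ⟨rfl⟩
  have hsub : π '' ({x | (e x).2 ∈ s ∩ Metric.closedBall 0 1 ∧ ψ (G x) (e x).2 = x} ∩ {x | G x = 0})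
      ⊆ (fun y => π (ψ (G z) y)) '' (s ∩ Metric.closedBall 0 1) := by
    rintro _ ⟨x, ⟨⟨h1, h2⟩, h3⟩, rfl⟩
    refine ⟨(e x).2, h1, ?_⟩
    have h3' : G x = 0 := h3
    rw [h3'] at h2
    simp only [hz, h2]
  refine (measure_mono hsub).trans_lt ?_
  refine ((hL.mono inter_subset_left).hausdorffMeasure_image_le (by positivity)).trans_lt ?_
  refine ENNReal.mul_lt_top (ENNReal.rpow_lt_top_of_nonneg (by positivity) (by simp)) ?_
  refine (measure_mono inter_subset_right).trans_lt ?_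
  have := isAddHaarMeasure_hausdorffMeasure (E := G'.ker)
  rw [hker] at this
  exact (isCompact_closedBall (0 : G'.ker) 1).measure_lt_top

/-- mollification -/
def mol {d : ℕ} {F : Type} [NormedAddCommGroup F] [NormedSpace ℝ F]
    (φ : ContDiffBump (0 : E d)) (f : E d → F) : E d → F :=
  convolution (φ.normed volume) f (ContinuousLinearMap.lsmul ℝ ℝ) volume

lemma mol_contDiff {d : ℕ} {F : Type} [NormedAddCommGroup F] [NormedSpace ℝ F] [CompleteSpace F]
    (φ : ContDiffBump (0 : E d)) (f : E d → F) (hf : Continuous f) : ContDiff ℝ 3 (mol φ f) := by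
  have := φ.hasCompactSupport_normed (μ := (volume : Measure (E d)))
  have h := this.contDiff_convolution_left (n := 3) (ContinuousLinearMap.lsmul ℝ ℝ)
    φ.contDiff_normed (hf.locallyIntegrable (μ := volume))
  exact h

lemma conv_fderiv {d : ℕ} {F : Type} [NormedAddCommGroup F] [NormedSpace ℝ F] [CompleteSpace F]
    (φ : ContDiffBump (0 : E d)) (f : E d → F) (hf : ContDiff ℝ 1 f) (hc : HasCompactSupport f) :
    fderiv ℝ (mol φ f) = mol φ (fderiv ℝ f) := by
  unfold mol
  ext1 x
  have hli : LocallyIntegrable (φ.normed (volume : Measure (E d))) volume :=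
    φ.continuous_normed.locallyIntegrable
  rw [(hc.hasFDerivAt_convolution_right (ContinuousLinearMap.lsmul ℝ ℝ) hli hf x).fderiv]
  rw [convolution_def, convolution_def]
  congr 1

lemma conv_close {d : ℕ} {F : Type} [NormedAddCommGroup F] [NormedSpace ℝ F] [CompleteSpace F]
    (f : E d → F) (hf : Continuous f) (hc : HasCompactSupport f) (ε : ℝ) (hε : 0 < ε) :
    ∃ δ > 0, ∀ φ : ContDiffBump (0 : E d), φ.rOut ≤ δ → ∀ x,
      dist (mol φ f x) (f x) ≤ ε := by
  have hu := hf.uniformContinuous_of_tendsto_cocompact hc.is_zero_at_infty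
  obtain ⟨δ, hδ, h⟩ := Metric.uniformContinuous_iff.1 hu ε hε
  refine ⟨δ, hδ, fun φ hφ x => ?_⟩
  refine φ.dist_normed_convolution_le hf.aestronglyMeasurable fun y hy => ?_
  exact (h (lt_of_lt_of_le (Metric.mem_ball.1 hy) hφ)).le

lemma conv_close1 {d : ℕ} {F : Type} [NormedAddCommGroup F] [NormedSpace ℝ F] [CompleteSpace F]
    (f : E d → F) (hf : ContDiff ℝ 1 f) (hc : HasCompactSupport f) (ε : ℝ) (hε : 0 < ε) :
    ∃ δ > 0, ∀ φ : ContDiffBump (0 : E d), φ.rOut ≤ δ → ∀ x,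
      dist (fderiv ℝ (mol φ f) x) (fderiv ℝ f x) ≤ ε := by
  obtain ⟨δ, hδ, H⟩ := conv_close (fderiv ℝ f) (hf.continuous_fderiv (by norm_num))
    (hc.fderiv (𝕜 := ℝ)) ε hε
  refine ⟨δ, hδ, fun φ hφ x => ?_⟩
  rw [conv_fderiv φ f hf hc]
  exact H φ hφ x

lemma approx_cpt {d m : ℕ} (f : E d → E m) (hf : ContDiff ℝ 2 f) (hc : HasCompactSupport f)
    (ε : ℝ) (hε : 0 < ε) :
    ∃ g : E d → E m, ContDiff ℝ 3 g ∧ ∀ x, dist (g x) (f x) ≤ ε ∧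
      dist (fderiv ℝ g x) (fderiv ℝ f x) ≤ ε ∧
      dist (fderiv ℝ (fderiv ℝ g) x) (fderiv ℝ (fderiv ℝ f) x) ≤ ε := by
  have hf1 : ContDiff ℝ 1 (fderiv ℝ f) := hf.fderiv_right (by norm_num)
  have hc1 := hc.fderiv (𝕜 := ℝ)
  obtain ⟨δ0, h0, H0⟩ := conv_close f hf.continuous hc ε hε
  obtain ⟨δ1, h1, H1⟩ := conv_close _ hf1.continuous hc1 ε hε
  obtain ⟨δ2, h2, H2⟩ := conv_close1 (fderiv ℝ f) hf1 hc1 ε hε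
  obtain ⟨δ, hδp, l0, l1, l2⟩ : ∃ δ : ℝ, 0 < δ ∧ δ ≤ δ0 ∧ δ ≤ δ1 ∧ δ ≤ δ2 :=
    ⟨min δ0 (min δ1 δ2), lt_min h0 (lt_min h1 h2), min_le_left _ _,
      (min_le_right _ _).trans (min_le_left _ _), (min_le_right _ _).trans (min_le_right _ _)⟩
  obtain ⟨φ, hφ⟩ : ∃ φ : ContDiffBump (0 : E d), φ.rOut = δ :=
    ⟨⟨δ / 2, δ, by linarith, by linarith⟩, rfl⟩
  have hm1 : ContDiff ℝ 1 f := hf.of_le (by norm_num)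
  have c1 := conv_fderiv φ f hm1 hc
  refine ⟨mol φ f, mol_contDiff φ f hf.continuous, fun x => ⟨H0 φ (hφ.trans_le l0) x, ?_, ?_⟩⟩
  · rw [c1]
    exact H1 φ (hφ.trans_le l1) x
  · rw [c1]
    exact H2 φ (hφ.trans_le l2) x

lemma approx_loc {d m : ℕ} (f : E d → E m) (hf : ContDiff ℝ 2 f) (R : ℝ) (hR : 0 < R)
    (ε : ℝ) (hε : 0 < ε) :
    ∃ g : E d → E m, ContDiff ℝ 3 g ∧ ∀ x ∈ Metric.ball (0 : E d) R, dist (g x) (f x) ≤ ε ∧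
      dist (fderiv ℝ g x) (fderiv ℝ f x) ≤ ε ∧
      dist (fderiv ℝ (fderiv ℝ g) x) (fderiv ℝ (fderiv ℝ f) x) ≤ ε := by
  let χ : ContDiffBump (0 : E d) := ⟨R, R + 1, hR, by linarith⟩
  have hχ : ContDiff ℝ 2 χ := χ.contDiff
  obtain ⟨g, hg, H⟩ := approx_cpt (fun x => χ x • f x) (hχ.smul hf) (χ.hasCompactSupport.smul_right) ε hε
  refine ⟨g, hg, fun x hx => ?_⟩
  have e0 : ∀ y ∈ Metric.ball (0 : E d) R, (fun x => χ x • f x) =ᶠ[𝓝 y] f := by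
    intro y hy
    filter_upwards [Metric.isOpen_ball.mem_nhds hy] with y hy
    have : χ y = 1 := χ.one_of_mem_closedBall (Metric.ball_subset_closedBall hy)
    simp [this]
  have e1 : fderiv ℝ (fun x => χ x • f x) =ᶠ[𝓝 x] fderiv ℝ f := (e0 x hx).fderiv
  have := H x
  rw [(e0 x hx).eq_of_nhds, e1.eq_of_nhds, e1.fderiv_eq] at this
  exact this

/-- The 2-jet as a continuous map. -/
def jet {d m : ℕ} (f : C2Maps d m) :
    C(E d, E m × (E d →L[ℝ] E m) × (E d →L[ℝ] (E d →L[ℝ] E m))) where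
  toFun x := (f.1 x, fderiv ℝ f.1 x, fderiv ℝ (fderiv ℝ f.1) x)
  continuous_toFun := by
    have h1 : ContDiff ℝ 1 (fderiv ℝ f.1) := f.2.fderiv_right (by norm_num)
    exact f.2.continuous.prodMk (h1.continuous.prodMk (h1.continuous_fderiv (by norm_num)))

lemma c2Topology_eq (d m : ℕ) :
    c2Topology d m = TopologicalSpace.induced (jet (d := d) (m := m)) inferInstance := by
  have := (ContinuousMap.isUniformEmbedding_toUniformOnFunIsCompact
    (α := E d) (β := E m × (E d →L[ℝ] E m) × (E d →L[ℝ] (E d →L[ℝ] E m)))).isInducing.eq_induced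
  refine Eq.trans ?_ (congrArg (TopologicalSpace.induced jet) this.symm)
  rw [induced_compose]
  rfl

lemma dense_C3 {d m : ℕ} (f : C2Maps d m) (U : Set (C2Maps d m))
    (hU : U ∈ @nhds _ (c2Topology d m) f) : ∃ g ∈ U, ContDiff ℝ 3 g.1 := by
  have hn : ∀ n : ℕ, ∃ g : C2Maps d m, ContDiff ℝ 3 g.1 ∧
      ∀ x ∈ Metric.ball (0 : E d) (n + 1), dist (jet f x) (jet g x) ≤ 1 / ((n:ℝ) + 1) := by
    intro n
    obtain ⟨g, hg, H⟩ := approx_loc f.1 f.2 (n + 1) (by positivity) (1 / ((n:ℝ) + 1)) (by positivity)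
    refine ⟨⟨g, hg.of_le (by norm_num)⟩, hg, fun x hx => ?_⟩
    obtain ⟨h0, h1, h2⟩ := H x hx
    rw [dist_comm, Prod.dist_eq, Prod.dist_eq]
    exact max_le h0 (max_le h1 h2)
  choose g hg H using hn
  have ht : Tendsto (fun n => jet (g n)) atTop (𝓝 (jet f)) := by
    refine (ContinuousMap.tendsto_iff_forall_isCompact_tendstoUniformlyOn (α := E d)
      (β := E m × (E d →L[ℝ] E m) × (E d →L[ℝ] (E d →L[ℝ] E m)))).2 ?_
    intro K hK
    refine (Metric.tendstoUniformlyOn_iff (β := E d)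
      (α := E m × (E d →L[ℝ] E m) × (E d →L[ℝ] (E d →L[ℝ] E m)))).2 ?_
    intro ε hε
    obtain ⟨R, hR⟩ := hK.isBounded.subset_ball (0 : E d)
    obtain ⟨N1, hN1⟩ := exists_nat_gt R
    obtain ⟨N2, hN2⟩ := exists_nat_one_div_lt hε
    filter_upwards [eventually_ge_atTop (max N1 N2)] with n hn x hx
    have a1 : (N1 : ℝ) ≤ n := by exact_mod_cast (le_max_left _ _).trans hn
    have a2 : (N2 : ℝ) ≤ n := by exact_mod_cast (le_max_right _ _).trans hn
    refine (H n x (Metric.ball_subset_ball (by linarith) (hR hx))).trans_lt (lt_of_le_of_lt ?_ hN2)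
    exact one_div_le_one_div_of_le (by positivity) (by linarith)
  rw [c2Topology_eq] at hU
  rw [nhds_induced, mem_comap] at hU
  obtain ⟨V, hV, hVU⟩ := hU
  obtain ⟨n, hn⟩ := (ht.eventually hV).exists
  exact ⟨g n, hVU hn, hg n⟩

/-- extension by zero of a vector indexed by the indices different from `i` -/
def iotaL {m : ℕ} (i : Fin m) : ({k : Fin m // k ≠ i} → ℝ) →L[ℝ] E m :=
  LinearMap.toContinuousLinearMap
    { toFun := fun c => WithLp.toLp 2 (fun k => if h : k ≠ i then c ⟨k, h⟩ else 0)
      map_add' := by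
        intro x y; ext k; by_cases h : k = i <;> simp [h]
      map_smul' := by
        intro x y; ext k; by_cases h : k = i <;> simp [h] }

lemma iotaL_apply {m : ℕ} (i : Fin m) (c : {k : Fin m // k ≠ i} → ℝ) (k : Fin m) :
    iotaL i c k = if h : k ≠ i then c ⟨k, h⟩ else 0 := rfl

/-- affine chart `w i = 1` -/
def iota1 {m : ℕ} (i : Fin m) (c : {k : Fin m // k ≠ i} → ℝ) : E m :=
  EuclideanSpace.single i 1 + iotaL i c

lemma iota1_rest {m : ℕ} (i : Fin m) (w : E m) (hw : w i = 1) :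
    iota1 i (fun k => w k.1) = w := by
  ext k
  by_cases h : k = i
  · subst h; simp [iota1, iotaL_apply, hw]
  · simp [iota1, iotaL_apply, h]

lemma iota1_self {m : ℕ} (i : Fin m) (c : {k : Fin m // k ≠ i} → ℝ) : iota1 i c i = 1 := by
  simp [iota1, iotaL_apply]

lemma iota1_contDiff {m : ℕ} (i : Fin m) {n : WithTop ℕ∞} : ContDiff ℝ n (iota1 i) :=
  contDiff_const.add (iotaL i).contDiff

abbrev Jet (d m : ℕ) : Type := E m × (E d →L[ℝ] E m) × (E d →L[ℝ] (E d →L[ℝ] E m))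

def IsBad {d m : ℕ} (i : Fin m) (j : Fin d) (J : Jet d m) (w : E m) (u : E d) : Prop :=
  w i = 1 ∧ u j = 1 ∧ (∀ v, inner ℝ w (J.2.1 v) = 0) ∧ J.2.1 u = 0 ∧
    ∀ v, inner ℝ w (J.2.2 v u) = 0

def Bad {d m : ℕ} (N : ℕ) (i : Fin m) (j : Fin d) : Set (Jet d m) :=
  {J | ∃ w ∈ Metric.closedBall (0 : E m) N, ∃ u ∈ Metric.closedBall (0 : E d) N, IsBad i j J w u}

lemma isClosed_Bad {d m : ℕ} (N : ℕ) (i : Fin m) (j : Fin d) : IsClosed (Bad N i j) := by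
  let C1 := Metric.closedBall (0 : E m) N
  let C2 := Metric.closedBall (0 : E d) N
  have : CompactSpace C1 := isCompact_iff_compactSpace.1 (isCompact_closedBall _ _)
  have : CompactSpace C2 := isCompact_iff_compactSpace.1 (isCompact_closedBall _ _)
  have hS : IsClosed {q : Jet d m × (C1 × C2) | IsBad i j q.1 q.2.1.1 q.2.2.1} := by
    simp only [IsBad, Set.ofPred_and, Set.ofPred_forall]
    have hw : Continuous fun q : Jet d m × (C1 × C2) => q.2.1.1 := by fun_prop
    have hu : Continuous fun q : Jet d m × (C1 × C2) => q.2.2.1 := by fun_prop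
    have hA : Continuous fun q : Jet d m × (C1 × C2) => q.1.2.1 := by fun_prop
    have hH : Continuous fun q : Jet d m × (C1 × C2) => q.1.2.2 := by fun_prop
    refine IsClosed.inter (isClosed_eq (by fun_prop) continuous_const) ?_
    refine IsClosed.inter (isClosed_eq (by fun_prop) continuous_const) ?_
    refine IsClosed.inter (isClosed_iInter fun v => isClosed_eq ?_ continuous_const) ?_
    · exact hw.inner (hA.clm_apply continuous_const)
    refine IsClosed.inter (isClosed_eq (hA.clm_apply hu) continuous_const) ?_
    refine isClosed_iInter fun v => isClosed_eq ?_ continuous_const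
    exact hw.inner ((hH.clm_apply continuous_const).clm_apply hu)
  have h2 := isClosedMap_fst_of_compactSpace (X := Jet d m) (Y := C1 × C2) _ hS
  convert h2 using 1
  ext J
  constructor
  · rintro ⟨w, hw, u, hu, h⟩
    exact ⟨(J, (⟨w, hw⟩, ⟨u, hu⟩)), h, rfl⟩
  · rintro ⟨⟨J', ⟨w, hw⟩, ⟨u, hu⟩⟩, h, rfl⟩
    exact ⟨w, hw, u, hu, h⟩

def Fset (d m : ℕ) (N : ℕ) (i : Fin m) (j : Fin d) : Set (C2Maps d m) :=
  {f | ∀ x ∈ Metric.closedBall (0 : E d) N, jet f x ∉ Bad N i j}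

lemma isOpen_Fset (d m N : ℕ) (i : Fin m) (j : Fin d) :
    IsOpen[c2Topology d m] (Fset d m N i j) := by
  rw [c2Topology_eq]
  refine isOpen_induced_iff.2 ⟨{h | MapsTo h (Metric.closedBall (0 : E d) N) (Bad N i j)ᶜ}, ?_, rfl⟩
  exact ContinuousMap.isOpen_setOfPred_mapsTo (isCompact_closedBall _ _) (isClosed_Bad N i j).isOpen_compl

abbrev Par (d : ℕ) {m : ℕ} (i : Fin m) : Type := E d × ({k : Fin m // k ≠ i} → ℝ) × E d

def innD (d : ℕ) : E d →L[ℝ] (E d →L[ℝ] ℝ) :=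
  LinearMap.toContinuousLinearMap
    { toFun := fun a => innerSL ℝ a
      map_add' := by intro x y; simp
      map_smul' := by intro x y; simp }

def genT {X Y Z : Type} [NormedAddCommGroup X] [NormedSpace ℝ X]
    [NormedAddCommGroup Y] [NormedSpace ℝ Y] [NormedAddCommGroup Z] [NormedSpace ℝ Z]
    (D : X →L[ℝ] (X →L[ℝ] ℝ)) (l : X →L[ℝ] ℝ) (y : Y) (io : Z →L[ℝ] Y) :
    X × Z × X →L[ℝ] (X →L[ℝ] Y) :=
  ((ContinuousLinearMap.smulRightL ℝ X Y).flip y).comp (D.comp (ContinuousLinearMap.fst ℝ X (Z × X)))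
  + (ContinuousLinearMap.smulRightL ℝ X Y l).comp (io.comp
      ((ContinuousLinearMap.fst ℝ Z X).comp (ContinuousLinearMap.snd ℝ X (Z × X))))

def genS {X Y Z : Type} [NormedAddCommGroup X] [NormedSpace ℝ X]
    [NormedAddCommGroup Y] [NormedSpace ℝ Y] [NormedAddCommGroup Z] [NormedSpace ℝ Z]
    (D : X →L[ℝ] (X →L[ℝ] ℝ)) (l : X →L[ℝ] ℝ) (y : Y) :
    X × Z × X →L[ℝ] (X →L[ℝ] X →L[ℝ] Y) :=
  (ContinuousLinearMap.smulRightL ℝ X (X →L[ℝ] Y) l).comp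
    (((ContinuousLinearMap.smulRightL ℝ X Y).flip y).comp (D.comp
      ((ContinuousLinearMap.snd ℝ Z X).comp (ContinuousLinearMap.snd ℝ X (Z × X)))))

def Tc {d m : ℕ} (i : Fin m) (j : Fin d) : Par d i →L[ℝ] (E d →L[ℝ] E m) :=
  genT (innD d) (EuclideanSpace.proj j) (EuclideanSpace.single i (1:ℝ)) (iotaL i)

def Sc {d m : ℕ} (i : Fin m) (j : Fin d) : Par d i →L[ℝ] (E d →L[ℝ] E d →L[ℝ] E m) :=
  genS (innD d) (EuclideanSpace.proj j) (EuclideanSpace.single i (1:ℝ))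

lemma Tc_apply {d m : ℕ} (i : Fin m) (j : Fin d) (p : Par d i) (v : E d) :
    Tc i j p v = inner ℝ p.1 v • EuclideanSpace.single i (1:ℝ) + v j • iotaL i p.2.1 := rfl

lemma Sc_apply {d m : ℕ} (i : Fin m) (j : Fin d) (p : Par d i) (v u : E d) :
    Sc i j p v u = v j • inner ℝ p.2.2 u • EuclideanSpace.single i (1:ℝ) := rfl

section gen
variable {X Y P : Type} [NormedAddCommGroup X] [NormedSpace ℝ X]
    [NormedAddCommGroup Y] [NormedSpace ℝ Y] [NormedAddCommGroup P] [NormedSpace ℝ P]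

lemma fd1 (g : X → Y) (hg : ContDiff ℝ 2 g) (T : X →L[ℝ] Y) (S : X →L[ℝ] X →L[ℝ] Y) :
    fderiv ℝ (fun x => g x + T x + S x x) = fun x => fderiv ℝ g x + T + (S + S.flip) x := by
  ext1 x
  have h1 : HasFDerivAt g (fderiv ℝ g x) x := (hg.differentiable (by norm_num) x).hasFDerivAt
  have h3 : HasFDerivAt (fun x => S x x) ((S + S.flip) x) x := by
    have := S.hasFDerivAt.clm_apply (hasFDerivAt_id x)
    exact this.congr_fderiv (by ext v; simp)
  exact ((h1.add T.hasFDerivAt).add h3).fderiv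

lemma fd2 (g : X → Y) (hg : ContDiff ℝ 2 g) (T : X →L[ℝ] Y) (S : X →L[ℝ] X →L[ℝ] Y) (x : X) :
    fderiv ℝ (fderiv ℝ (fun x => g x + T x + S x x)) x = fderiv ℝ (fderiv ℝ g) x + (S + S.flip) := by
  rw [fd1 g hg]
  have hf1 : ContDiff ℝ 1 (fderiv ℝ g) := hg.fderiv_right (by norm_num)
  have h1 := (hf1.differentiable (by norm_num) x).hasFDerivAt
  exact ((h1.add_const T).add (S + S.flip).hasFDerivAt).fderiv

lemma pert_contDiff (g : X → Y) (hg : ContDiff ℝ 2 g) (T : X →L[ℝ] Y)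
    (S : X →L[ℝ] X →L[ℝ] Y) : ContDiff ℝ 2 (fun x => g x + T x + S x x) :=
  (hg.add T.contDiff).add (S.contDiff.clm_apply contDiff_id)

lemma gen_cont (g : X → Y) (hg : ContDiff ℝ 2 g) (T : P →L[ℝ] X →L[ℝ] Y)
    (S : P →L[ℝ] X →L[ℝ] X →L[ℝ] Y) : Continuous fun q : P × X =>
    (g q.2 + T q.1 q.2 + S q.1 q.2 q.2,
      fderiv ℝ g q.2 + T q.1 + (S q.1 + (S q.1).flip) q.2,
      fderiv ℝ (fderiv ℝ g) q.2 + (S q.1 + (S q.1).flip)) := by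
  have hf1 : ContDiff ℝ 1 (fderiv ℝ g) := hg.fderiv_right (by norm_num)
  have h0 : Continuous fun q : P × X => g q.2 := hg.continuous.comp continuous_snd
  have h1 : Continuous fun q : P × X => fderiv ℝ g q.2 := hf1.continuous.comp continuous_snd
  have h2 : Continuous fun q : P × X => fderiv ℝ (fderiv ℝ g) q.2 :=
    (hf1.continuous_fderiv (by norm_num)).comp continuous_snd
  have hT : Continuous fun q : P × X => T q.1 := T.continuous.comp continuous_fst
  have hS : Continuous fun q : P × X => S q.1 := S.continuous.comp continuous_fst
  have hSf : Continuous fun q : P × X => (S q.1).flip :=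
    (ContinuousLinearMap.flipₗᵢ ℝ X X Y).continuous.comp hS
  have hx : Continuous fun q : P × X => q.2 := continuous_snd
  have hSS := hS.add hSf
  exact ((h0.add (hT.clm_apply hx)).add ((hS.clm_apply hx).clm_apply hx)).prodMk
    (((h1.add hT).add (hSS.clm_apply hx)).prodMk (h2.add hSS))

end gen

def pert {d m : ℕ} (g : C2Maps d m) (i : Fin m) (j : Fin d) (p : Par d i) : C2Maps d m :=
  ⟨fun x => g.1 x + Tc i j p x + Sc i j p x x, pert_contDiff g.1 g.2 _ _⟩

lemma jet_pert {d m : ℕ} (g : C2Maps d m) (i : Fin m) (j : Fin d) (p : Par d i) (x : E d) :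
    jet (pert g i j p) x = (g.1 x + Tc i j p x + Sc i j p x x,
      fderiv ℝ g.1 x + Tc i j p + (Sc i j p + (Sc i j p).flip) x,
      fderiv ℝ (fderiv ℝ g.1) x + (Sc i j p + (Sc i j p).flip)) := by
  change (_, fderiv ℝ (fun x => g.1 x + Tc i j p x + Sc i j p x x) x,
    fderiv ℝ (fderiv ℝ (fun x => g.1 x + Tc i j p x + Sc i j p x x)) x) = _
  rw [fd2 g.1 g.2, fd1 g.1 g.2]
  rfl

lemma continuous_jet_pert {d m : ℕ} (g : C2Maps d m) (i : Fin m) (j : Fin d) :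
    Continuous fun p => jet (pert g i j p) := by
  apply ContinuousMap.continuous_of_continuous_uncurry
  have : (Function.uncurry fun (p : Par d i) x => jet (pert g i j p) x) = fun q : Par d i × E d =>
    (g.1 q.2 + Tc i j q.1 q.2 + Sc i j q.1 q.2 q.2,
      fderiv ℝ g.1 q.2 + Tc i j q.1 + (Sc i j q.1 + (Sc i j q.1).flip) q.2,
      fderiv ℝ (fderiv ℝ g.1) q.2 + (Sc i j q.1 + (Sc i j q.1).flip)) := by
    ext1 ⟨p, x⟩
    exact jet_pert g i j p x
  change Continuous (Function.uncurry fun (p : Par d i) x => jet (pert g i j p) x)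
  rw [this]
  exact gen_cont g.1 g.2 (Tc i j) (Sc i j)

lemma pert_zero {d m : ℕ} (g : C2Maps d m) (i : Fin m) (j : Fin d) : pert g i j 0 = g := by
  apply Subtype.ext
  ext1 x
  simp [pert]

section Phi
variable {d m : ℕ} (g : E d → E m) (i : Fin m) (j : Fin d)

abbrev Dom {d m : ℕ} (i : Fin m) (j : Fin d) : Type :=
  E d × ({k : Fin m // k ≠ i} → ℝ) × ({l : Fin d // l ≠ j} → ℝ)

def PhiB (q : Dom i j) : E d :=
  WithLp.toLp 2 fun l => - inner ℝ (iota1 i q.2.1)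
      (fderiv ℝ (fderiv ℝ g) q.1 (EuclideanSpace.single l 1) (iota1 j q.2.2)) +
    if l = j then 1 / 2 * inner ℝ (iota1 i q.2.1)
      (fderiv ℝ (fderiv ℝ g) q.1 (iota1 j q.2.2) (iota1 j q.2.2)) else 0

def PhiC (q : Dom i j) : {k : Fin m // k ≠ i} → ℝ :=
  fun k => - (fderiv ℝ g q.1 (iota1 j q.2.2)) k.1

def PhiA (q : Dom i j) : E d :=
  WithLp.toLp 2 fun l => - (inner ℝ (iota1 i q.2.1)
      (fderiv ℝ g q.1 (EuclideanSpace.single l 1)) +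
    (if l = j then inner ℝ (iota1 i q.2.1) (iotaL i (PhiC g i j q)) +
      inner ℝ (PhiB g i j q) q.1 else 0) + q.1 j * PhiB g i j q l)

def Phi (q : Dom i j) : Par d i := (PhiA g i j q, PhiC g i j q, PhiB g i j q)

lemma contDiff_Phi (hg : ContDiff ℝ 3 g) : ContDiff ℝ 1 (Phi g i j) := by
  have hf1 : ContDiff ℝ 2 (fderiv ℝ g) := hg.fderiv_right (by norm_num)
  have hf2 : ContDiff ℝ 1 (fderiv ℝ (fderiv ℝ g)) := hf1.fderiv_right (by norm_num)
  have hx : ContDiff ℝ 1 fun q : Dom i j => q.1 := contDiff_fst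
  have hw : ContDiff ℝ 1 fun q : Dom i j => iota1 i q.2.1 :=
    (iota1_contDiff i).comp (contDiff_fst.comp contDiff_snd)
  have hu : ContDiff ℝ 1 fun q : Dom i j => iota1 j q.2.2 :=
    (iota1_contDiff j).comp (contDiff_snd.comp contDiff_snd)
  have h1 : ContDiff ℝ 1 fun q : Dom i j => fderiv ℝ g q.1 :=
    (hf1.of_le (by norm_num)).comp contDiff_fst
  have h2 : ContDiff ℝ 1 fun q : Dom i j => fderiv ℝ (fderiv ℝ g) q.1 :=
    hf2.comp contDiff_fst
  have hB : ContDiff ℝ 1 (PhiB g i j) := by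
    refine contDiff_euclidean.2 fun l => ?_
    refine ContDiff.add ?_ ?_
    · exact (hw.inner ℝ ((h2.clm_apply contDiff_const).clm_apply hu)).neg
    · by_cases h : l = j
      · simp only [h, if_true]
        exact contDiff_const.mul (hw.inner ℝ ((h2.clm_apply hu).clm_apply hu))
      · simp only [h, if_false]
        exact contDiff_const
  have hC : ContDiff ℝ 1 (PhiC g i j) := by
    refine contDiff_pi.2 fun k => ?_
    exact ((contDiff_euclidean.1 (h1.clm_apply hu)) k.1).neg
  have hA : ContDiff ℝ 1 (PhiA g i j) := by
    refine contDiff_euclidean.2 fun l => ?_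
    refine ContDiff.neg (ContDiff.add (ContDiff.add ?_ ?_) ?_)
    · exact hw.inner ℝ (h1.clm_apply contDiff_const)
    · by_cases h : l = j
      · simp only [h, if_true]
        exact (hw.inner ℝ ((iotaL i).contDiff.comp hC)).add (hB.inner ℝ hx)
      · simp only [h, if_false]
        exact contDiff_const
    · exact (contDiff_euclidean.1 hx j).mul (contDiff_euclidean.1 hB l)
  exact hA.prodMk (hC.prodMk hB)

lemma finrank_lt : Module.finrank ℝ (Dom i j) < Module.finrank ℝ (Par d i) := by
  have hj : 0 < d := j.pos
  simp only [Module.finrank_prod, finrank_euclideanSpace_fin, Module.finrank_fintype_fun_eq_card]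
  have : Fintype.card {l : Fin d // l ≠ j} < d := by
    have := Fintype.card_subtype_lt (p := fun l : Fin d => l ≠ j) (x := j) (by simp)
    simpa using this
  omega

end Phi

lemma bad_mem {d m : ℕ} (g : C2Maps d m) (i : Fin m) (j : Fin d) (p : Par d i) (x : E d)
    (w : E m) (u : E d) (h : IsBad i j (jet (pert g i j p) x) w u) :
    p = Phi g.1 i j (x, fun k => w k.1, fun l => u l.1) := by
  obtain ⟨hw, hu, h1, h2, h3⟩ := h
  rw [jet_pert] at h1 h2 h3
  obtain ⟨a, c, b⟩ := p
  simp only [add_apply, ContinuousLinearMap.flip_apply, Tc_apply, Sc_apply,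
    inner_add_right, inner_smul_right, EuclideanSpace.inner_single_right, hw, hu] at h1 h2 h3
  have ww := iota1_rest i w hw
  have uu := iota1_rest j u hu
  have hb : b = PhiB g.1 i j (x, fun k => w k.1, fun l => u l.1) := by
    have h3u := h3 u
    ext l
    have h3l := h3 (EuclideanSpace.single l 1)
    simp only [PhiB, ww, uu]
    by_cases hl : l = j
    · subst hl
      simp [EuclideanSpace.inner_single_right, hu] at h3l h3u ⊢
      linarith
    · have hl' : ¬ j = l := fun h => hl h.symm
      simp [EuclideanSpace.inner_single_right, hl, hl'] at h3l ⊢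
      linarith
  have hc : c = PhiC g.1 i j (x, fun k => w k.1, fun l => u l.1) := by
    ext ⟨k, hk⟩
    have := congrArg (fun z : E m => z k) h2
    simp [iotaL_apply, hk] at this
    simp only [PhiC, uu]
    linarith
  have ha : a = PhiA g.1 i j (x, fun k => w k.1, fun l => u l.1) := by
    ext l
    have h1l := h1 (EuclideanSpace.single l 1)
    simp only [PhiA, ww, ← hb, ← hc]
    by_cases hl : l = j
    · subst hl
      simp [EuclideanSpace.inner_single_right] at h1l ⊢
      linarith
    · have hl' : ¬ j = l := fun h => hl h.symm
      simp [EuclideanSpace.inner_single_right, hl, hl'] at h1l ⊢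
      linarith
  exact Prod.ext ha (Prod.ext hc hb)

lemma dense_Fset (d m N : ℕ) (i : Fin m) (j : Fin d) :
    @Dense (C2Maps d m) (c2Topology d m) (Fset d m N i j) := by
  let _ := c2Topology d m
  intro f
  rw [mem_closure_iff_nhds]
  intro U hU
  obtain ⟨V, hVU, hVo, hfV⟩ := mem_nhds_iff.1 hU
  obtain ⟨g, hgV, hg3⟩ := dense_C3 f V (hVo.mem_nhds hfV)
  have hd := (contDiff_Phi g.1 i j hg3).dense_compl_range_of_finrank_lt_finrank (finrank_lt i j)
  have hc : Continuous fun p => pert g i j p := by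
    have := c2Topology_eq d m
    refine continuous_iff_le_induced.2 ?_
    change _ ≤ TopologicalSpace.induced _ (c2Topology d m)
    rw [this, induced_compose]
    exact continuous_iff_le_induced.1 (continuous_jet_pert g i j)
  have hO : IsOpen ((fun p => pert g i j p) ⁻¹' V) := hVo.preimage hc
  obtain ⟨p, hp, hpV⟩ := hd.inter_open_nonempty _ hO ⟨0, by simpa [pert_zero] using hgV⟩
  refine ⟨pert g i j p, hVU hp, fun x _ hb => hpV ?_⟩
  obtain ⟨w, -, u, -, h⟩ := hb
  exact ⟨_, (bad_mem g i j p x w u h).symm⟩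

def Gm {d m : ℕ} (f : E d → E m) (i : Fin m) (q : E d × ({k : Fin m // k ≠ i} → ℝ)) : E d :=
  WithLp.toLp 2 fun l => inner ℝ (iota1 i q.2) (fderiv ℝ f q.1 (EuclideanSpace.single l 1))

lemma Gm_contDiff {d m : ℕ} (f : E d → E m) (hf : ContDiff ℝ 2 f) (i : Fin m) :
    ContDiff ℝ 1 (Gm f i) := by
  have hf1 : ContDiff ℝ 1 (fderiv ℝ f) := hf.fderiv_right (by norm_num)
  refine contDiff_euclidean.2 fun l => ?_
  exact ((iota1_contDiff i).comp contDiff_snd).inner ℝ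
    ((hf1.comp contDiff_fst).clm_apply contDiff_const)

lemma sum_single {d : ℕ} (u : E d) : ∑ l, u l • EuclideanSpace.single l (1:ℝ) = u := by
  ext k
  simp [Finset.sum_apply, Pi.single_apply]

lemma inner_Gm {d m : ℕ} (f : E d → E m) (i : Fin m) (q : E d × ({k : Fin m // k ≠ i} → ℝ))
    (u : E d) : inner ℝ u (Gm f i q) = inner ℝ (iota1 i q.2) (fderiv ℝ f q.1 u) := by
  conv_rhs => rw [← sum_single u]
  rw [map_sum, inner_sum, PiLp.inner_apply]
  refine Finset.sum_congr rfl fun l _ => ?_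
  rw [map_smul, inner_smul_right]
  simp [Gm, mul_comm]

lemma inner_Gm' {d m : ℕ} (f : E d → E m) (hf : ContDiff ℝ 2 f) (i : Fin m)
    (q : E d × ({k : Fin m // k ≠ i} → ℝ)) (u : E d) (v : E d) (c : {k : Fin m // k ≠ i} → ℝ) :
    inner ℝ u (fderiv ℝ (Gm f i) q (v, c)) = inner ℝ (iota1 i q.2) (fderiv ℝ (fderiv ℝ f) q.1 v u)
      + inner ℝ (iotaL i c) (fderiv ℝ f q.1 u) := by
  have hf1 : ContDiff ℝ 1 (fderiv ℝ f) := hf.fderiv_right (by norm_num)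
  have hG : HasFDerivAt (Gm f i) (fderiv ℝ (Gm f i) q) q :=
    ((Gm_contDiff f hf i).differentiable (by norm_num) q).hasFDerivAt
  have e1 := (hasFDerivAt_const u q).inner ℝ hG
  have hw : HasFDerivAt (fun q : E d × ({k : Fin m // k ≠ i} → ℝ) => iota1 i q.2)
      ((iotaL i).comp (ContinuousLinearMap.snd ℝ (E d) ({k : Fin m // k ≠ i} → ℝ))) q :=
    (((iotaL i).comp (ContinuousLinearMap.snd ℝ (E d) ({k : Fin m // k ≠ i} → ℝ))).hasFDerivAt).const_add _
  have hD : HasFDerivAt (fun q : E d × ({k : Fin m // k ≠ i} → ℝ) => fderiv ℝ f q.1)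
      ((fderiv ℝ (fderiv ℝ f) q.1).comp (ContinuousLinearMap.fst ℝ (E d) ({k : Fin m // k ≠ i} → ℝ))) q :=
    (hf1.differentiable (by norm_num) q.1).hasFDerivAt.comp q hasFDerivAt_fst
  have hDu := hD.clm_apply (hasFDerivAt_const u q)
  have e2 := hw.inner ℝ hDu
  have e3 : (fun q => inner ℝ u (Gm f i q)) =
      fun q => inner ℝ (iota1 i q.2) (fderiv ℝ f q.1 u) := funext fun q => inner_Gm f i q u
  rw [e3] at e1
  have := congrArg (fun L => L (v, c)) (e1.unique e2)
  simpa using this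

lemma Gm_surj {d m : ℕ} (f : C2Maps d m) (i : Fin m) (hF : ∀ N j, f ∈ Fset d m N i j)
    (q : E d × ({k : Fin m // k ≠ i} → ℝ)) (hq : Gm f.1 i q = 0) :
    (fderiv ℝ (Gm f.1 i) q).range = ⊤ := by
  by_contra hne
  have hne' : (fderiv ℝ (Gm f.1 i) q).rangeᗮ ≠ ⊥ := fun h =>
    hne (Submodule.orthogonal_eq_bot_iff.1 h)
  obtain ⟨u0, hu0, hu0n⟩ := Submodule.exists_mem_ne_zero_of_ne_bot hne'
  obtain ⟨j, hj⟩ : ∃ j, u0 j ≠ 0 := by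
    by_contra! h
    exact hu0n (by ext l; simpa using h l)
  set u : E d := (u0 j)⁻¹ • u0 with hu
  have huo : u ∈ (fderiv ℝ (Gm f.1 i) q).rangeᗮ := Submodule.smul_mem _ _ hu0
  have huj : u j = 1 := by simp [hu, hj]
  have key : ∀ v c, inner ℝ u (fderiv ℝ (Gm f.1 i) q (v, c)) = 0 := fun v c =>
    Submodule.inner_left_of_mem_orthogonal (K := (fderiv ℝ (Gm f.1 i) q).range) ⟨(v, c), rfl⟩ huo
  simp only [inner_Gm' f.1 f.2] at key
  have k1 : ∀ v, inner ℝ (iota1 i q.2) (fderiv ℝ (fderiv ℝ f.1) q.1 v u) = 0 := by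
    intro v; simpa using key v 0
  have k2 : ∀ c, inner ℝ (iotaL i c) (fderiv ℝ f.1 q.1 u) = 0 := by
    intro c; simpa using key 0 c
  have k3 : ∀ v, inner ℝ (iota1 i q.2) (fderiv ℝ f.1 q.1 v) = 0 := by
    intro v; rw [← inner_Gm, hq, inner_zero_right]
  have k4 : fderiv ℝ f.1 q.1 u = 0 := by
    have hs : inner ℝ (EuclideanSpace.single i (1:ℝ)) (fderiv ℝ f.1 q.1 u) = 0 := by
      have := k3 u
      rw [iota1, inner_add_left, k2, add_zero] at this
      exact this
    have hall : ∀ w : E m, inner ℝ w (fderiv ℝ f.1 q.1 u) = 0 := by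
      intro w
      have hw : w = w i • EuclideanSpace.single i (1:ℝ) + iotaL i (fun k => w k.1) := by
        ext k
        by_cases h : k = i
        · subst h; simp [iotaL_apply]
        · simp [iotaL_apply, h]
      rw [hw, inner_add_left, inner_smul_left, k2, hs]
      simp
    exact inner_self_eq_zero.1 (hall _)
  obtain ⟨N, hN⟩ := exists_nat_gt (max ‖q.1‖ (max ‖iota1 i q.2‖ ‖u‖))
  have hN1 : ‖q.1‖ ≤ N := (le_max_left _ _).trans hN.le
  have hN2 : ‖iota1 i q.2‖ ≤ N := ((le_max_left _ _).trans (le_max_right _ _)).trans hN.le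
  have hN3 : ‖u‖ ≤ N := ((le_max_right _ _).trans (le_max_right _ _)).trans hN.le
  refine hF N j q.1 (by simpa using hN1) ⟨iota1 i q.2, by simpa using hN2, u, by simpa using hN3, ?_⟩
  exact ⟨iota1_self i _, huj, k3, k4, k1⟩

lemma Z_finite {d m : ℕ} (f : C2Maps d m) (i : Fin m) (hF : ∀ N j, f ∈ Fset d m N i j)
    (K : Set (E d)) (hK : IsCompact K) :
    μH[((m - 1 : ℕ) : ℝ)] (Prod.fst '' ((K ×ˢ Metric.closedBall (0 : {k : Fin m // k ≠ i} → ℝ) 1) ∩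
      {q | Gm f.1 i q = 0})) < ⊤ := by
  have hG := Gm_contDiff f.1 f.2 i
  have hcl : IsClosed {q | Gm f.1 i q = 0} := isClosed_eq hG.continuous continuous_const
  have hc : IsCompact ((K ×ˢ Metric.closedBall (0 : {k : Fin m // k ≠ i} → ℝ) 1) ∩
      {q | Gm f.1 i q = 0}) := (hK.prod (isCompact_closedBall _ _)).inter_right hcl
  have hk : Module.finrank ℝ (E d × ({k : Fin m // k ≠ i} → ℝ)) =
      Module.finrank ℝ (E d) + (m - 1) := by
    simp [Module.finrank_prod]
  have main : μH[((m - 1 : ℕ) : ℝ)] (Prod.fst ''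
      (((K ×ˢ Metric.closedBall (0 : {k : Fin m // k ≠ i} → ℝ) 1) ∩
      {q | Gm f.1 i q = 0}) ∩ {q | Gm f.1 i q = 0})) < ⊤ := by
    refine hc.induction_on (p := fun s => μH[((m - 1 : ℕ) : ℝ)] (Prod.fst ''
      (s ∩ {q | Gm f.1 i q = 0})) < ⊤) (by simp) ?_ ?_ ?_
    · intro s t hst ht
      exact (measure_mono (image_mono (inter_subset_inter_left _ hst))).trans_lt ht
    · intro s t hs ht
      rw [union_inter_distrib_right, image_union]
      exact (measure_union_le _ _).trans_lt (ENNReal.add_lt_top.2 ⟨hs, ht⟩)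
    · intro z hz
      have hstr : HasStrictFDerivAt (Gm f.1 i) (fderiv ℝ (Gm f.1 i) z) z :=
        hG.hasStrictFDerivAt (by norm_num)
      obtain ⟨V, hV, h⟩ := local_finite (Gm f.1 i) _ z hstr (Gm_surj f i hF z hz.2) hz.2 (m - 1) hk
        (ContinuousLinearMap.fst ℝ (E d) ({k : Fin m // k ≠ i} → ℝ))
      exact ⟨V, mem_nhdsWithin_of_mem_nhds hV, h⟩
  rwa [inter_assoc, inter_self] at main

lemma crit_cover {d m : ℕ} (hm : 1 ≤ m) (f : E d → E m) (x : E d)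
    (hx : (jac f x).rank ≤ m - 1) :
    ∃ i : Fin m, ∃ c ∈ Metric.closedBall (0 : {k : Fin m // k ≠ i} → ℝ) 1, Gm f i (x, c) = 0 := by
  have hli : ¬ LinearIndependent ℝ (jac f x).row := by
    intro h
    have := h.rank_matrix
    simp at this
    omega
  obtain ⟨w0, hsum, i0, hi0⟩ := Fintype.not_linearIndependent_iff.1 hli
  have : Nonempty (Fin m) := ⟨i0⟩
  obtain ⟨i, hi⟩ := Finite.exists_max fun k => |w0 k|
  have hpos : 0 < |w0 i| := lt_of_lt_of_le (abs_pos.2 hi0) (hi i0)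
  have hne : w0 i ≠ 0 := abs_pos.1 hpos
  refine ⟨i, fun k => w0 k.1 / w0 i, ?_, ?_⟩
  · rw [mem_closedBall_zero_iff, pi_norm_le_iff_of_nonneg zero_le_one]
    intro k
    rw [Real.norm_eq_abs, abs_div]
    exact div_le_one_of_le₀ (hi k.1) hpos.le
  · have hw : iota1 i (fun k => w0 k.1 / w0 i) = WithLp.toLp 2 (fun k => w0 k / w0 i) :=
      iota1_rest i (WithLp.toLp 2 (fun k => w0 k / w0 i)) (by simp [hne])
    ext l
    simp only [Gm, hw]
    have hl := congrFun hsum l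
    simp [jac] at hl
    simp only [PiLp.inner_apply]
    simp
    have : ∑ k, (fderiv ℝ f x (EuclideanSpace.single l 1)) k * (w0 k / w0 i) =
        (∑ k, w0 k * (fderiv ℝ f x (EuclideanSpace.single l 1)) k) / w0 i := by
      rw [Finset.sum_div]
      refine Finset.sum_congr rfl fun k _ => by ring
    rw [this, hl, zero_div]

/-- there is a `G_δ` set (a countable intersection of open dense
sets for the topology of `C²` convergence) of `C²` maps `f : ℝ^d → ℝ^m` whose
critical set `Σ_f = {x : rank Df(x) ≤ m−1}` has locally finite
`(d−1)`-dimensional Hausdorff measure. -/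
theorem statement0 (d m : ℕ) (hm : 1 ≤ m) (hmd : m ≤ d) :
    ∃ F : ℕ → Set (C2Maps d m),
      (∀ n, IsOpen[c2Topology d m] (F n)) ∧
      (∀ n, @Dense (C2Maps d m) (c2Topology d m) (F n)) ∧
      ∀ f ∈ ⋂ n, F n, ∀ K : Set (E d), IsCompact K →
        μH[(d:ℝ) - 1] ({x : E d | (jac f.1 x).rank ≤ m - 1} ∩ K) < ⊤ := by
  have : Nonempty (Fin m) := ⟨⟨0, hm⟩⟩
  have : Nonempty (Fin d) := ⟨⟨0, by omega⟩⟩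
  obtain ⟨e, he⟩ := exists_surjective_nat (ℕ × Fin m × Fin d)
  refine ⟨fun n => Fset d m (e n).1 (e n).2.1 (e n).2.2, fun n => isOpen_Fset _ _ _ _ _,
    fun n => dense_Fset _ _ _ _ _, fun f hf K hK => ?_⟩
  have hF : ∀ i N j, f ∈ Fset d m N i j := by
    intro i N j
    obtain ⟨n, hn⟩ := he (N, i, j)
    have := mem_iInter.1 hf n
    rw [hn] at this
    exact this
  have hle : ((m - 1 : ℕ) : ℝ) ≤ (d : ℝ) - 1 := by
    rw [Nat.cast_sub hm]
    have : (m : ℝ) ≤ d := by exact_mod_cast hmd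
    push_cast
    linarith
  refine (Measure.hausdorffMeasure_mono hle _).trans_lt ?_
  have hsub : {x : E d | (jac f.1 x).rank ≤ m - 1} ∩ K ⊆ ⋃ i : Fin m,
      Prod.fst '' ((K ×ˢ Metric.closedBall (0 : {k : Fin m // k ≠ i} → ℝ) 1) ∩
        {q | Gm f.1 i q = 0}) := by
    rintro x ⟨hx, hxK⟩
    obtain ⟨i, c, hc, h⟩ := crit_cover hm f.1 x hx
    exact mem_iUnion.2 ⟨i, (x, c), ⟨⟨hxK, hc⟩, h⟩, rfl⟩
  refine (measure_mono hsub).trans_lt ?_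
  refine (measure_iUnion_le _).trans_lt ?_
  rw [tsum_fintype]
  exact ENNReal.sum_lt_top.2 fun i _ => Z_finite f i (hF i) K hK

end
end

section
/- Let 1 ≤ m ≤ d and let f : [0,1]^d → ℝ^m be a non-constant C¹ function. Then for every ε > 0, N_f(ε) ≤ d·2^{2m+d−1}·d! · (1/β_f^{−1}(ε)), where β_f^{−1} is the inverse of the strictly increasing map δ ↦ β_f(δ) = ω_{Df}(√d·δ)·(1 + √d·δ + 4·d^{d+1/2}·(d+1)⁴). -/
open MeasureTheory Set Topology
open scoped ENNReal

noncomputable section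

/-! ### Measure of sections in product probability spaces -/

lemma pi_measure_le_of_section {ι : Type*} [Fintype ι] [DecidableEq ι] {X : Type*}
    [MeasurableSpace X] [Nonempty X] (μ : ι → Measure X) [∀ i, IsProbabilityMeasure (μ i)]
    (S : Set (ι → X)) (hS : MeasurableSet S) (i : ι) (p : ℝ≥0∞)
    (h : ∀ x : ι → X, μ i {t | Function.update x i t ∈ S} ≤ p) :
    Measure.pi μ S ≤ p := by
  have x0 : ι → X := fun _ => Classical.arbitrary X
  rw [← lintegral_indicator_one hS, lintegral_eq_lmarginal_univ x0,
    lmarginal_erase' _ (measurable_one.indicator hS) (Finset.mem_univ i)]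
  have hle : (fun x : ι → X => ∫⁻ xi, S.indicator 1 (Function.update x i xi) ∂μ i)
      ≤ fun _ => p := by
    intro x
    have hms : MeasurableSet {t | Function.update x i t ∈ S} :=
      (measurable_update x) hS
    have : (fun xi => S.indicator (1 : (ι → X) → ℝ≥0∞) (Function.update x i xi))
        = ({t | Function.update x i t ∈ S}).indicator 1 := by
      ext t; simp [Set.indicator]
    simp only [this]
    rw [lintegral_indicator_one hms]
    exact h x
  refine (lmarginal_mono hle x0).trans ?_
  simp [lmarginal]

/-- uniform probability measure on `[0,1]`. -/
def unifI : Measure ℝ := volume.restrict (Icc (0:ℝ) 1)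

instance : IsProbabilityMeasure unifI := ⟨by simp [unifI]⟩

/-- uniform measure on matrices with entries in `[0,1]`. -/
def unifMat (m d : ℕ) : Measure (Fin m → Fin d → ℝ) :=
  Measure.pi fun _ => Measure.pi fun _ => unifI

instance (m d : ℕ) : IsProbabilityMeasure (unifMat m d) := by
  unfold unifMat; infer_instance

lemma unifMat_ae (m d : ℕ) :
    ∀ᵐ A ∂(unifMat m d), ∀ i j, A i j ∈ Icc (0:ℝ) 1 := by
  have h1 : ∀ᵐ t ∂unifI, t ∈ Icc (0:ℝ) 1 := ae_restrict_mem measurableSet_Icc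
  rw [ae_all_iff]; intro i
  rw [ae_all_iff]; intro j
  have h2 : ∀ᵐ a ∂(Measure.pi fun _ : Fin d => unifI), a j ∈ Icc (0:ℝ) 1 :=
    (Measure.tendsto_eval_ae_ae (μ := fun _ : Fin d => unifI) (i := j)).eventually h1
  exact (Measure.tendsto_eval_ae_ae
    (μ := fun _ : Fin m => Measure.pi fun _ : Fin d => unifI) (i := i)).eventually h2

lemma unifI_slab (α β τ r : ℝ) (hr : 0 < r) (hτ : 0 ≤ τ) (hβ : |β| = r) :
    unifI {t | |α + β * t| ≤ τ} ≤ ENNReal.ofReal (2 * τ / r) := by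
  have hsub : {t | |α + β * t| ≤ τ} ⊆ Icc (-α/β - τ/r) (-α/β + τ/r) := by
    intro t ht
    have hβ0 : β ≠ 0 := by rintro rfl; simp at hβ; linarith
    have : |t - (-α/β)| ≤ τ / r := by
      rw [le_div_iff₀ hr, ← hβ, ← abs_mul]
      have : (t - -α/β) * β = α + β * t := by field_simp; ring
      rw [this]; exact ht
    rw [abs_le] at this
    constructor <;> linarith [this.1, this.2]
  refine (Measure.restrict_apply_le _ _).trans ((measure_mono hsub).trans ?_)
  rw [Real.volume_Icc]
  apply ENNReal.ofReal_le_ofReal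
  apply le_of_eq; ring

/-- The set of perturbations making `M + r A` nearly degenerate, with dominant row `i`. -/
def badSet {m d : ℕ} (M : Fin m → Fin d → ℝ) (r τ : ℝ) (i : Fin m) :
    Set (Fin m → Fin d → ℝ) :=
  {A | ∃ c ∈ (Icc (fun _ => -1) (fun _ => 1) ∩ {c | c i = 1} : Set (Fin m → ℝ)),
    ∀ j, |∑ k, c k * (M k j + r * A k j)| ≤ τ}

lemma isClosed_badSet {m d : ℕ} (M : Fin m → Fin d → ℝ) (r τ : ℝ) (i : Fin m) :
    IsClosed (badSet M r τ i) := by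
  set K : Set (Fin m → ℝ) := Icc (fun _ => -1) (fun _ => 1) ∩ {c | c i = 1} with hK
  have hKc : IsCompact K := isCompact_Icc.inter_right
    (isClosed_eq (continuous_apply i) continuous_const)
  have : CompactSpace K := isCompact_iff_compactSpace.mp hKc
  have hcl : IsClosed {p : K × (Fin m → Fin d → ℝ) |
      ∀ j, |∑ k, p.1.1 k * (M k j + r * p.2 k j)| ≤ τ} := by
    simp only [ofPred_forall]
    refine isClosed_iInter fun j => isClosed_le ?_ continuous_const
    refine continuous_abs.comp (continuous_finsetSum _ fun k _ => ?_)
    exact ((continuous_apply k).comp (continuous_subtype_val.comp continuous_fst)).mul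
      (by fun_prop)
  have := isClosedMap_snd_of_compactSpace _ hcl
  convert this using 1
  ext A
  simp [badSet, ← hK]

lemma exists_normal {m d : ℕ} (hmd : m ≤ d) (i : Fin m) (R : Fin m → Fin d → ℝ) :
    ∃ n : Fin d → ℝ, (∃ j, n j = 1) ∧ (∀ j, |n j| ≤ 1) ∧
      ∀ k, k ≠ i → ∑ j, n j * R k j = 0 := by
  let T : (Fin d → ℝ) →ₗ[ℝ] ({k : Fin m // k ≠ i} → ℝ) :=
    Matrix.toLin' (Matrix.of fun (k : {k : Fin m // k ≠ i}) j => R k.1 j)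
  have hlt : Module.finrank ℝ ({k : Fin m // k ≠ i} → ℝ) < Module.finrank ℝ (Fin d → ℝ) := by
    have := i.2
    simp only [Module.finrank_fintype_fun_eq_card, Fintype.card_fin]
    rw [Fintype.card_subtype_compl]
    simp
    omega
  have hker := LinearMap.ker_ne_bot_of_finrank_lt (f := T) hlt
  obtain ⟨v, hv, hv0⟩ := (Submodule.ne_bot_iff _).1 hker
  have : Nonempty (Fin d) := ⟨⟨0, by have := i.2; omega⟩⟩
  obtain ⟨j, hj⟩ := Finite.exists_max fun j => |v j|
  have hvj : v j ≠ 0 := by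
    intro h0
    apply hv0
    ext l
    have := hj l
    simpa [h0] using this
  refine ⟨fun l => v l / v j, ⟨j, div_self hvj⟩, fun l => ?_, fun k hk => ?_⟩
  · rw [abs_div, div_le_one (abs_pos.2 hvj)]; exact hj l
  · have h1 : T v ⟨k, hk⟩ = 0 := by
      rw [LinearMap.mem_ker.1 hv]; rfl
    have h2 : ∑ l, R k l * v l = 0 := by
      simpa [T, Matrix.mulVec, dotProduct] using h1
    have : ∑ l, v l / v j * R k l = (∑ l, R k l * v l) / v j := by
      rw [Finset.sum_div]; exact Finset.sum_congr rfl fun l _ => by ring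
    rw [this, h2, zero_div]

lemma measure_badSet {m d : ℕ} (hmd : m ≤ d) (M : Fin m → Fin d → ℝ) (r τ : ℝ)
    (hr : 0 < r) (hτ : 0 ≤ τ) (i : Fin m) :
    unifMat m d (badSet M r τ i) ≤ ENNReal.ofReal (2 * (d * τ) / r) := by
  unfold unifMat
  refine pi_measure_le_of_section _ _ (isClosed_badSet M r τ i).measurableSet i _ fun A => ?_
  obtain ⟨n, ⟨j, hj⟩, hn, horth⟩ := exists_normal hmd i (fun k l => M k l + r * A k l)
  set S : Set (Fin d → ℝ) := {a | |∑ l, n l * (M i l + r * a l)| ≤ d * τ} with hS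
  have hScl : IsClosed S := isClosed_le (by fun_prop) continuous_const
  have hsub : {t | Function.update A i t ∈ badSet M r τ i} ⊆ S := by
    rintro a ⟨c, ⟨hc, hci⟩, hcA⟩
    simp only [mem_ofPred_eq] at hci
    have key : ∑ l, n l * (M i l + r * a l)
        = ∑ l, n l * ∑ k, c k * (M k l + r * Function.update A i a k l) := by
      have h1 : ∀ l, n l * ∑ k, c k * (M k l + r * Function.update A i a k l)
          = ∑ k, c k * (n l * (M k l + r * Function.update A i a k l)) := by
        intro l; rw [Finset.mul_sum]; exact Finset.sum_congr rfl fun k _ => by ring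
      simp only [h1]
      rw [Finset.sum_comm]
      simp only [← Finset.mul_sum]
      rw [Finset.sum_eq_single i]
      · simp [hci]
      · intro k _ hk
        have := horth k hk
        simp only [Function.update_of_ne hk]
        rw [this, mul_zero]
      · simp
    rw [hS, mem_ofPred_eq, key]
    refine (Finset.abs_sum_le_sum_abs _ _).trans ?_
    calc _ ≤ ∑ l : Fin d, τ := by
          refine Finset.sum_le_sum fun l _ => ?_
          rw [abs_mul]
          calc _ ≤ 1 * τ := mul_le_mul (hn l) (hcA l) (abs_nonneg _) zero_le_one
            _ = τ := one_mul _
      _ = d * τ := by simp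
  refine (measure_mono hsub).trans ?_
  refine pi_measure_le_of_section _ _ hScl.measurableSet j _ fun a => ?_
  have hset : {t | Function.update a j t ∈ S} =
      {t | |(n j * M i j + ∑ l ∈ Finset.univ.erase j, n l * (M i l + r * a l)) + r * t|
        ≤ d * τ} := by
    ext t
    simp only [hS, mem_ofPred_eq]
    rw [← Finset.add_sum_erase _ _ (Finset.mem_univ j)]
    have : ∑ l ∈ Finset.univ.erase j, n l * (M i l + r * Function.update a j t l)
        = ∑ l ∈ Finset.univ.erase j, n l * (M i l + r * a l) :=
      Finset.sum_congr rfl fun l hl => by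
        rw [Function.update_of_ne (Finset.ne_of_mem_erase hl)]
    rw [this, Function.update_self, hj]
    ring_nf
  rw [hset]
  exact unifI_slab _ _ _ _ hr (by positivity) (abs_of_pos hr)

/-! ### Random linear perturbation -/

/-- linear map of a matrix. -/
def matLin {m d : ℕ} (A : Fin m → Fin d → ℝ) : E d →L[ℝ] E m :=
  LinearMap.toContinuousLinearMap (Matrix.toEuclideanLin (Matrix.of A))

lemma matLin_apply {m d : ℕ} (A : Fin m → Fin d → ℝ) (x : E d) (i : Fin m) :
    matLin A x i = ∑ j, A i j * x j := by
  simp [matLin, Matrix.mulVec, dotProduct]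

lemma matLin_norm {m d : ℕ} (hmd : m ≤ d) (A : Fin m → Fin d → ℝ)
    (hA : ∀ i j, A i j ∈ Icc (0:ℝ) 1) : ‖matLin A‖ ≤ d := by
  refine ContinuousLinearMap.opNorm_le_bound _ (by positivity) fun x => ?_
  have h1 : ∀ i, ‖matLin A x i‖ ^ 2 ≤ d * ‖x‖ ^ 2 := by
    intro i
    rw [matLin_apply, EuclideanSpace.norm_sq_eq, Real.norm_eq_abs, sq_abs]
    refine (Finset.sum_mul_sq_le_sq_mul_sq _ _ _).trans ?_
    simp only [Real.norm_eq_abs, sq_abs]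
    refine mul_le_mul_of_nonneg_right ?_ (by positivity)
    calc ∑ j, A i j ^ 2 ≤ ∑ j : Fin d, (1:ℝ) := Finset.sum_le_sum fun j _ => by
          have := hA i j
          nlinarith [this.1, this.2]
      _ = d := by simp
  have h2 : ‖matLin A x‖ ^ 2 ≤ (d * ‖x‖) ^ 2 := by
    rw [EuclideanSpace.norm_sq_eq]
    calc _ ≤ ∑ i : Fin m, d * ‖x‖ ^ 2 := Finset.sum_le_sum fun i _ => h1 i
      _ = m * (d * ‖x‖ ^ 2) := by simp
      _ ≤ d * (d * ‖x‖ ^ 2) := by gcongr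
      _ = _ := by ring
  exact (pow_le_pow_iff_left₀ (norm_nonneg _) (by positivity) two_ne_zero).1 h2

lemma jac_add_matLin {m d : ℕ} (F : E d → E m) (hF : ContDiff ℝ 1 F) (r : ℝ)
    (A : Fin m → Fin d → ℝ) (x : E d) (i : Fin m) (j : Fin d) :
    jac (fun x => F x + r • matLin A x) x i j = jac F x i j + r * A i j := by
  have hd : DifferentiableAt ℝ F x := (hF.differentiable (by norm_num)) x
  have : fderiv ℝ (fun x => F x + r • matLin A x) x = fderiv ℝ F x + r • matLin A :=
    (hd.hasFDerivAt.add ((matLin A).hasFDerivAt.const_smul r)).fderiv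
  simp only [jac, Matrix.of_apply, this]
  simp [matLin_apply, EuclideanSpace.single, Pi.single_apply]

lemma exists_row_combination {m d : ℕ} (hm : 1 ≤ m) (J : Matrix (Fin m) (Fin d) ℝ)
    (hJ : J.rank ≤ m - 1) :
    ∃ i, ∃ c : Fin m → ℝ, c i = 1 ∧ (∀ k, |c k| ≤ 1) ∧ ∀ j, ∑ k, c k * J k j = 0 := by
  have hdep : ¬ LinearIndependent ℝ J.row := by
    intro h
    have := h.rank_matrix
    simp at this
    omega
  obtain ⟨g, hg, i0, hi0⟩ := Fintype.not_linearIndependent_iff.1 hdep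
  have : Nonempty (Fin m) := ⟨i0⟩
  obtain ⟨i, hi⟩ := Finite.exists_max fun k => |g k|
  have hgi : g i ≠ 0 := by
    intro h0
    have := hi i0
    rw [h0, abs_zero] at this
    exact hi0 (abs_nonpos_iff.1 this)
  refine ⟨i, fun k => g k / g i, div_self hgi, fun k => ?_, fun j => ?_⟩
  · rw [abs_div, div_le_one (abs_pos.2 hgi)]; exact hi k
  · have h1 := congrFun hg j
    simp only [Finset.sum_apply, Pi.smul_apply, smul_eq_mul, Matrix.row, Pi.zero_apply] at h1
    have : ∑ k, g k / g i * J k j = (∑ k, g k * J k j) / g i := by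
      rw [Finset.sum_div]; exact Finset.sum_congr rfl fun l _ => by ring
    rw [this, h1, zero_div]

lemma abs_coord_le {n : ℕ} (x : E n) (i : Fin n) : |x i| ≤ ‖x‖ := by
  simpa using PiLp.norm_apply_le x i

lemma jac_sub_le {m d : ℕ} (F : E d → E m) (x y : E d) (i : Fin m) (j : Fin d) :
    |jac F x i j - jac F y i j| ≤ ‖fderiv ℝ F x - fderiv ℝ F y‖ := by
  have h := abs_coord_le ((fderiv ℝ F x - fderiv ℝ F y) (EuclideanSpace.single j 1)) i
  have h2 := (fderiv ℝ F x - fderiv ℝ F y).le_opNorm (EuclideanSpace.single j 1)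
  simp only [EuclideanSpace.norm_single, norm_one, mul_one] at h2
  refine le_trans (le_of_eq ?_) (h.trans h2)
  simp [jac]

/-- grid corner -/
def gridPt {d : ℕ} (N : ℕ) (k : Fin d → Fin N) : E d :=
  WithLp.toLp 2 fun i => ((k i : ℕ) : ℝ) / N

/-- grid cell -/
def gridCell {d : ℕ} (N : ℕ) (k : Fin d → Fin N) : Set (E d) :=
  {x | ∀ i, x i ∈ Icc (((k i : ℕ) : ℝ) / N) (((k i : ℕ) : ℝ) / N + 1 / N)}

lemma gridPt_mem {d : ℕ} (N : ℕ) (k : Fin d → Fin N) : gridPt N k ∈ unitCube d := by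
  intro i
  simp only [gridPt]
  have h : ((k i : ℕ) : ℝ) ≤ N := by exact_mod_cast (k i).2.le
  exact ⟨by positivity, div_le_one_of_le₀ h (by positivity)⟩

lemma exists_gridCell {d : ℕ} (N : ℕ) (hN : 0 < N) (x : E d) (hx : x ∈ openCube d) :
    ∃ k : Fin d → Fin N, x ∈ gridCell N k := by
  have hN' : (0:ℝ) < N := by exact_mod_cast hN
  have hlt : ∀ i, ⌊x i * N⌋₊ < N := by
    intro i
    rw [Nat.floor_lt (mul_nonneg (hx i).1.le hN'.le)]
    nlinarith [(hx i).2]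
  refine ⟨fun i => ⟨⌊x i * N⌋₊, hlt i⟩, fun i => ⟨?_, ?_⟩⟩
  · simp only
    rw [div_le_iff₀ hN']
    exact Nat.floor_le (mul_nonneg (hx i).1.le hN'.le)
  · simp only
    rw [← add_div, le_div_iff₀ hN']
    exact (Nat.lt_floor_add_one _).le

lemma norm_le_sqrt_mul {d : ℕ} (x : E d) (c : ℝ) (hc : 0 ≤ c) (h : ∀ i, |x i| ≤ c) :
    ‖x‖ ≤ Real.sqrt d * c := by
  rw [EuclideanSpace.norm_eq]
  calc Real.sqrt (∑ i, ‖x i‖ ^ 2) ≤ Real.sqrt (∑ i : Fin d, c ^ 2) := by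
        apply Real.sqrt_le_sqrt
        exact Finset.sum_le_sum fun i _ => by
          rw [Real.norm_eq_abs]; exact pow_le_pow_left₀ (abs_nonneg _) (h i) 2
    _ = Real.sqrt (d * c ^ 2) := by simp
    _ = _ := by rw [Real.sqrt_mul (by positivity), Real.sqrt_sq hc]

lemma ediam_gridCell {d : ℕ} (N : ℕ) (k : Fin d → Fin N) :
    Metric.ediam (gridCell N k) ≤ ENNReal.ofReal (Real.sqrt d / N) := by
  refine Metric.ediam_le fun x hx y hy => ?_
  rw [edist_dist, dist_eq_norm]
  apply ENNReal.ofReal_le_ofReal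
  have := norm_le_sqrt_mul (x - y) (1 / N) (by positivity) fun i => by
    simp only [PiLp.sub_apply, abs_le]
    have h1 := hx i
    have h2 := hy i
    constructor <;> linarith [h1.1, h1.2, h2.1, h2.2]
  rwa [mul_one_div] at this

/-- union of the bad sets over rows, at the grid cell `k`. -/
def badCell {m d : ℕ} (F : E d → E m) (r L : ℝ) (N : ℕ) (k : Fin d → Fin N) :
    Set (Fin m → Fin d → ℝ) :=
  ⋃ i, badSet (fun a b => jac F (gridPt N k) a b) r (m * (L / N)) i

lemma measurableSet_badCell {m d : ℕ} (F : E d → E m) (r L : ℝ) (N : ℕ)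
    (k : Fin d → Fin N) : MeasurableSet (badCell F r L N k) :=
  MeasurableSet.iUnion fun i => (isClosed_badSet _ _ _ i).measurableSet

lemma measure_badCell {m d : ℕ} (hmd : m ≤ d) (F : E d → E m) (r L : ℝ) (hr : 0 < r)
    (hL : 0 ≤ L) (N : ℕ) (k : Fin d → Fin N) :
    unifMat m d (badCell F r L N k) ≤
      ENNReal.ofReal (m * (2 * (d * (m * (L / N))) / r)) := by
  refine (measure_iUnion_le _).trans ?_
  rw [tsum_fintype]
  refine (Finset.sum_le_sum fun i _ =>
    measure_badSet hmd _ r (m * (L / N)) hr (by positivity) i).trans ?_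
  rw [Finset.sum_const, Finset.card_univ, Fintype.card_fin, nsmul_eq_mul,
    ENNReal.ofReal_mul (by positivity), ENNReal.ofReal_natCast]

lemma mem_badCell {m d : ℕ} (hm : 1 ≤ m) (F : E d → E m) (hF : ContDiff ℝ 1 F)
    (r L : ℝ) (N : ℕ) (k : Fin d → Fin N)
    (hL : ∀ x ∈ unitCube d, ∀ y ∈ unitCube d, (∀ i, |x i - y i| ≤ 1 / N) →
      ‖fderiv ℝ F x - fderiv ℝ F y‖ ≤ L / N)
    (A : Fin m → Fin d → ℝ) (x : E d)
    (hx : x ∈ critSet (fun x => F x + r • matLin A x)) (hxk : x ∈ gridCell N k) :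
    A ∈ badCell F r L N k := by
  obtain ⟨hxo, hrank⟩ := hx
  obtain ⟨i, c, hci, hc, hsum⟩ := exists_row_combination hm _ hrank
  simp only [jac_add_matLin F hF] at hsum
  have hclose : ‖fderiv ℝ F (gridPt N k) - fderiv ℝ F x‖ ≤ L / N := by
    refine hL _ (gridPt_mem N k) _ (fun i => ⟨(hxo i).1.le, (hxo i).2.le⟩) fun i => ?_
    have h1 := hxk i
    simp only [gridPt, abs_le]
    have : (0:ℝ) ≤ 1 / N := by positivity
    constructor <;> linarith [h1.1, h1.2]
  refine mem_iUnion.2 ⟨i, c, ⟨⟨fun k => (abs_le.1 (hc k)).1, fun k => (abs_le.1 (hc k)).2⟩, hci⟩,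
    fun j => ?_⟩
  have : ∑ l, c l * (jac F (gridPt N k) l j + r * A l j)
      = ∑ l, c l * (jac F (gridPt N k) l j - jac F x l j) := by
    rw [← sub_zero (∑ l, c l * (jac F (gridPt N k) l j + r * A l j)), ← hsum j,
      ← Finset.sum_sub_distrib]
    exact Finset.sum_congr rfl fun l _ => by ring
  rw [this]
  refine (Finset.abs_sum_le_sum_abs _ _).trans ?_
  calc _ ≤ ∑ l : Fin m, L / N := by
        refine Finset.sum_le_sum fun l _ => ?_
        rw [abs_mul]
        calc _ ≤ 1 * (L / N) := mul_le_mul (hc l) ((jac_sub_le F _ _ l j).trans hclose)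
              (abs_nonneg _) zero_le_one
          _ = _ := one_mul _
    _ = _ := by simp

open Filter in
lemma core {m d : ℕ} (hm : 1 ≤ m) (hmd : m ≤ d) (F : E d → E m) (hF : ContDiff ℝ 1 F)
    (r L : ℝ) (hr : 0 < r) (hL0 : 0 ≤ L)
    (hL : ∀ᶠ N : ℕ in atTop, ∀ x ∈ unitCube d, ∀ y ∈ unitCube d,
      (∀ i, |x i - y i| ≤ 1 / N) → ‖fderiv ℝ F x - fderiv ℝ F y‖ ≤ L / N) :
    ∃ A : Fin m → Fin d → ℝ, (∀ i j, A i j ∈ Icc (0:ℝ) 1) ∧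
      μH[(d:ℝ) - 1] (critSet (fun x => F x + r • matLin A x)) ≤
        ENNReal.ofReal (2 * m ^ 2 * d * L * Real.sqrt d ^ (d - 1) / r) := by
  classical
  have hd1 : 1 ≤ d := hm.trans hmd
  set cnt : ℕ → (Fin m → Fin d → ℝ) → ℝ≥0∞ := fun N A =>
    ∑ k : Fin d → Fin N, (badCell F r L N k).indicator
      (fun _ => ENNReal.ofReal (Real.sqrt d / N) ^ ((d:ℝ) - 1)) A with hcnt
  have hmeas : ∀ N, Measurable (cnt N) := fun N =>
    Finset.measurable_fun_sum _ fun k _ =>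
      measurable_const.indicator (measurableSet_badCell F r L N k)
  have hint : ∀ N : ℕ, 0 < N → ∫⁻ A, cnt N A ∂(unifMat m d) ≤
      ENNReal.ofReal (2 * m ^ 2 * d * L * Real.sqrt d ^ (d - 1) / r) := by
    intro N hN
    have hN' : (0:ℝ) < N := by exact_mod_cast hN
    rw [hcnt]
    simp only
    rw [lintegral_finsetSum _ fun k _ =>
      measurable_const.indicator (measurableSet_badCell F r L N k)]
    have hone : ∀ k : Fin d → Fin N, ∫⁻ A, (badCell F r L N k).indicator
        (fun _ => ENNReal.ofReal (Real.sqrt d / N) ^ ((d:ℝ) - 1)) A ∂(unifMat m d) ≤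
        ENNReal.ofReal ((Real.sqrt d / N) ^ (d - 1) * (m * (2 * (d * (m * (L / N))) / r))) := by
      intro k
      rw [lintegral_indicator_const (measurableSet_badCell F r L N k),
        ENNReal.ofReal_mul (by positivity)]
      refine mul_le_mul' (le_of_eq ?_) (measure_badCell hmd F r L hr hL0 N k)
      have : (d:ℝ) - 1 = ((d - 1 : ℕ) : ℝ) := by push_cast [hd1]; ring
      rw [this, ENNReal.rpow_natCast, ENNReal.ofReal_pow (by positivity)]
    refine (Finset.sum_le_sum fun k _ => hone k).trans ?_
    rw [Finset.sum_const, nsmul_eq_mul, ← ENNReal.ofReal_natCast,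
      ← ENNReal.ofReal_mul (by positivity)]
    apply ENNReal.ofReal_le_ofReal
    apply le_of_eq
    obtain ⟨e, rfl⟩ : ∃ e, d = e + 1 := ⟨d - 1, by omega⟩
    simp only [Finset.card_univ, Fintype.card_fun, Fintype.card_fin, Nat.add_sub_cancel]
    push_cast
    rw [div_pow]
    field_simp
    ring
  have hfatou : ∫⁻ A, liminf (fun N => cnt N A) atTop ∂(unifMat m d) ≤
      ENNReal.ofReal (2 * m ^ 2 * d * L * Real.sqrt d ^ (d - 1) / r) := by
    refine (lintegral_liminf_le hmeas).trans ?_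
    refine liminf_le_of_frequently_le' (Eventually.frequently ?_)
    filter_upwards [eventually_gt_atTop 0] with N hN using hint N hN
  obtain ⟨A, hAN, hA⟩ := exists_notMem_null_le_lintegral
    (μ := unifMat m d) (f := fun A => liminf (fun N => cnt N A) atTop)
    (N := {A | ¬ ∀ i j, A i j ∈ Icc (0:ℝ) 1})
    (Measurable.liminf hmeas).aemeasurable (ae_iff.1 (unifMat_ae m d))
  refine ⟨A, not_not.1 hAN, le_trans ?_ (hA.trans hfatou)⟩
  have htend : Tendsto (fun N : ℕ => ENNReal.ofReal (Real.sqrt d / N)) atTop (𝓝 0) := by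
    rw [← ENNReal.ofReal_zero]
    exact ENNReal.tendsto_ofReal (tendsto_const_div_atTop_nhds_zero_nat _)
  refine (Measure.hausdorffMeasure_le_liminf_sum
    (ι := fun N : ℕ => {k : Fin d → Fin N // A ∈ badCell F r L N k}) ((d:ℝ) - 1) _
    (fun N : ℕ => ENNReal.ofReal (Real.sqrt d / N)) htend
    (fun N k => gridCell N k.1) (Eventually.of_forall fun N k => ediam_gridCell N k.1) ?_).trans ?_
  · filter_upwards [hL, eventually_gt_atTop 0] with N hN hN0 x hx
    obtain ⟨k, hk⟩ := exists_gridCell N hN0 x hx.1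
    exact mem_iUnion.2 ⟨⟨k, mem_badCell hm F hF r L N k hN A x hx hk⟩, hk⟩
  · refine liminf_le_liminf (Eventually.of_forall fun N => ?_)
    simp only [hcnt, Set.indicator_apply]
    rw [← Finset.sum_filter]
    rw [← Finset.sum_subtype_eq_sum_filter]
    have hd' : (0:ℝ) ≤ (d:ℝ) - 1 := by
      have : (1:ℝ) ≤ d := by exact_mod_cast hd1
      linarith
    have : ∑ k : {k : Fin d → Fin N // A ∈ badCell F r L N k},
        Metric.ediam (gridCell N k.1) ^ ((d:ℝ) - 1) ≤
        ∑ k : {k : Fin d → Fin N // A ∈ badCell F r L N k},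
        ENNReal.ofReal (Real.sqrt d / N) ^ ((d:ℝ) - 1) :=
      Finset.sum_le_sum fun k _ => ENNReal.rpow_le_rpow (ediam_gridCell N k.1) hd'
    refine this.trans (le_of_eq ?_)
    simp

/-! ### Smoothing -/

lemma one_sub_sum_le_prod {ι : Type*} (s : Finset ι) (t : ι → ℝ) (h0 : ∀ i, 0 ≤ t i)
    (h1 : ∀ i, t i ≤ 1) : 1 - ∑ i ∈ s, t i ≤ ∏ i ∈ s, (1 - t i) ∧ ∏ i ∈ s, (1 - t i) ≤ 1 := by
  classical
  induction s using Finset.induction_on with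
  | empty => simp
  | insert a s ha ih =>
    rw [Finset.sum_insert ha, Finset.prod_insert ha]
    have h3 : 0 ≤ ∏ i ∈ s, (1 - t i) := Finset.prod_nonneg fun i _ => by linarith [h1 i]
    constructor
    · nlinarith [h0 a, h1 a, ih.1, ih.2]
    · nlinarith [h0 a, h1 a, ih.1, ih.2]

/-- the unit cube in `Fin d → ℝ`. -/
abbrev uI (d : ℕ) : Set (Fin d → ℝ) := Icc (fun _ => 0) (fun _ => 1)

lemma volume_uI (d : ℕ) : (volume : Measure (Fin d → ℝ)) (uI d) = 1 := by
  rw [Real.volume_Icc_pi]; simp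

instance (d : ℕ) : IsProbabilityMeasure ((volume : Measure (Fin d → ℝ)).restrict (uI d)) :=
  ⟨by rw [Measure.restrict_apply_univ, volume_uI]⟩

lemma integral_shift {d : ℕ} {X : Type*} [NormedAddCommGroup X] [NormedSpace ℝ X]
    [CompleteSpace X] (F : (Fin d → ℝ) → X) (hF : Continuous F) (h : Fin d → ℝ)
    (hh : ∀ i, |h i| ≤ 1) (c : X) (W : ℝ) (hW : 0 ≤ W)
    (hc1 : ∀ u ∈ uI d, ‖F u - c‖ ≤ W) (hc2 : ∀ u ∈ uI d, ‖F (u + h) - c‖ ≤ W) :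
    ‖(∫ u in uI d, F (u + h)) - ∫ u in uI d, F u‖ ≤ 2 * W * ∑ i, |h i| := by
  set I := uI d with hI
  set I' : Set (Fin d → ℝ) := Icc (h) (fun i => h i + 1) with hI'
  have hpre : (fun u : Fin d → ℝ => u + h) ⁻¹' I' = I := by
    ext u
    simp only [hI, hI', mem_preimage, mem_Icc, Pi.le_def, Pi.add_apply]
    constructor
    · rintro ⟨a, b⟩; exact ⟨fun i => by linarith [a i], fun i => by linarith [b i]⟩
    · rintro ⟨a, b⟩; exact ⟨fun i => by linarith [a i], fun i => by linarith [b i]⟩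
  have hshift : ∀ G : (Fin d → ℝ) → X, ∫ u in I, G (u + h) = ∫ u in I', G u := by
    intro G
    rw [← hpre]
    exact (measurePreserving_add_right volume h).setIntegral_preimage_emb
      (measurableEmbedding_addRight h) G I'
  have hvol' : (volume : Measure (Fin d → ℝ)) I' = 1 := by
    rw [hI', Real.volume_Icc_pi]; simp
  have hvol : (volume : Measure (Fin d → ℝ)) I = 1 := volume_uI d
  set G : (Fin d → ℝ) → X := fun u => F u - c with hG
  have hGc : Continuous G := hF.sub continuous_const
  have hFi : ∀ {s : Set (Fin d → ℝ)}, IsCompact s → IntegrableOn F s :=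
    fun hs => hF.continuousOn.integrableOn_compact hs
  have hGi : ∀ {s : Set (Fin d → ℝ)}, IsCompact s → IntegrableOn G s :=
    fun hs => hGc.continuousOn.integrableOn_compact hs
  have hIc : IsCompact I := isCompact_Icc
  have hIc' : IsCompact I' := isCompact_Icc
  have e1 : ∫ u in I, G u = (∫ u in I, F u) - c := by
    rw [hG, integral_sub (hFi hIc) (integrableOn_const (by rw [hvol]; simp))]
    simp [Measure.real, hvol]
  have e2 : ∫ u in I', G u = (∫ u in I', F u) - c := by
    rw [hG, integral_sub (hFi hIc') (integrableOn_const (by rw [hvol']; simp))]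
    simp [Measure.real, hvol']
  have hdiff : (∫ u in I, F (u + h)) - ∫ u in I, F u
      = (∫ u in I' \ I, G u) - ∫ u in I \ I', G u := by
    rw [hshift]
    have a1 := integral_inter_add_sdiff (μ := volume) (s := I) (t := I') (f := G)
      measurableSet_Icc (hGi hIc)
    have a2 := integral_inter_add_sdiff (μ := volume) (s := I') (t := I) (f := G)
      measurableSet_Icc (hGi hIc')
    rw [e1] at a1
    rw [e2, inter_comm] at a2
    have a3 : ∫ u in I, F u = (∫ u in I ∩ I', G u) + (∫ u in I \ I', G u) + c := by
      rw [a1]; abel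
    have a4 : ∫ u in I', F u = (∫ u in I ∩ I', G u) + (∫ u in I' \ I, G u) + c := by
      rw [a2]; abel
    rw [a3, a4]; abel
  -- volumes of the differences
  have hint : I ∩ I' = Icc (fun i => max 0 (h i)) (fun i => min 1 (h i + 1)) := by
    rw [hI, hI', Icc_inter_Icc]; rfl
  have hlen : ∀ i, min 1 (h i + 1) - max 0 (h i) = 1 - |h i| := by
    intro i
    rcases le_total 0 (h i) with h0 | h0
    · rw [max_eq_right h0, min_eq_left (by linarith), abs_of_nonneg h0]
    · rw [max_eq_left h0, min_eq_right (by linarith), abs_of_nonpos h0]; ring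
  have hvi : (volume : Measure (Fin d → ℝ)).real (I ∩ I') = ∏ i, (1 - |h i|) := by
    rw [hint, Measure.real, Real.volume_Icc_pi, ENNReal.toReal_prod]
    refine Finset.prod_congr rfl fun i _ => ?_
    rw [hlen, ENNReal.toReal_ofReal (by linarith [hh i])]
  have hb := (one_sub_sum_le_prod Finset.univ (fun i => |h i|) (fun i => abs_nonneg _) hh).1
  have v1 : (volume : Measure (Fin d → ℝ)).real (I \ I') ≤ ∑ i, |h i| := by
    have := measureReal_inter_add_sdiff (μ := (volume : Measure (Fin d → ℝ))) (s := I) (t := I')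
      measurableSet_Icc (by rw [hvol]; simp)
    rw [hvi] at this
    have h3 : (volume : Measure (Fin d → ℝ)).real I = 1 := by simp [Measure.real, hvol]
    linarith
  have v2 : (volume : Measure (Fin d → ℝ)).real (I' \ I) ≤ ∑ i, |h i| := by
    have := measureReal_inter_add_sdiff (μ := (volume : Measure (Fin d → ℝ))) (s := I') (t := I)
      measurableSet_Icc (by rw [hvol']; simp)
    rw [inter_comm, hvi] at this
    have h3 : (volume : Measure (Fin d → ℝ)).real I' = 1 := by simp [Measure.real, hvol']
    linarith
  have n1 : ‖∫ u in I \ I', G u‖ ≤ W * ∑ i, |h i| := by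
    refine (norm_setIntegral_le_of_norm_le_const
      ((measure_mono sdiff_subset).trans_lt (by rw [hvol]; simp)) fun u hu => hc1 u hu.1).trans ?_
    gcongr
  have n2 : ‖∫ u in I' \ I, G u‖ ≤ W * ∑ i, |h i| := by
    refine (norm_setIntegral_le_of_norm_le_const (C := W)
      ((measure_mono sdiff_subset).trans_lt (by rw [hvol']; simp)) fun u hu => ?_).trans ?_
    · have : u - h ∈ I := by rw [← hpre]; simpa using hu.1
      simpa using hc2 _ this
    · gcongr
  rw [hdiff]
  refine (norm_sub_le _ _).trans ?_
  linarith

/-- averaging point -/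
def avgPt {d : ℕ} (s : ℝ) (x : E d) (u : Fin d → ℝ) : E d :=
  (1 - s) • x + s • WithLp.toLp 2 u

lemma avgPt_apply {d : ℕ} (s : ℝ) (x : E d) (u : Fin d → ℝ) (i : Fin d) :
    avgPt s x u i = (1 - s) * x i + s * u i := by simp [avgPt]

lemma continuous_avgPt {d : ℕ} (s : ℝ) :
    Continuous fun p : E d × (Fin d → ℝ) => avgPt s p.1 p.2 := by
  unfold avgPt
  have : Continuous fun p : E d × (Fin d → ℝ) => (WithLp.toLp 2 p.2 : E d) :=
    (PiLp.continuous_toLp 2 _).comp continuous_snd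
  fun_prop

lemma avgPt_mem {d : ℕ} {s : ℝ} (hs0 : 0 ≤ s) (hs1 : s ≤ 1) {x : E d} (hx : x ∈ unitCube d)
    {u : Fin d → ℝ} (hu : u ∈ uI d) : avgPt s x u ∈ unitCube d := by
  intro i
  rw [avgPt_apply]
  have h1 := hx i
  have h2 : 0 ≤ u i := hu.1 i
  have h3 : u i ≤ 1 := hu.2 i
  constructor
  · nlinarith [h1.1, h1.2]
  · nlinarith [h1.1, h1.2]

lemma convex_unitCube (d : ℕ) : Convex ℝ (unitCube d) := by
  intro x hx y hy a b ha hb hab i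
  have h1 := hx i
  have h2 := hy i
  simp only [PiLp.add_apply, PiLp.smul_apply, smul_eq_mul]
  constructor
  · nlinarith [h1.1, h1.2, h2.1, h2.2]
  · nlinarith [h1.1, h1.2, h2.1, h2.2]

lemma hasFDerivAt_avg {d m : ℕ} (f : E d → E m) (hf : ContDiff ℝ 1 f) (s : ℝ) (x : E d) :
    HasFDerivAt (fun x => ∫ u in uI d, f (avgPt s x u))
      (∫ u in uI d, (1 - s) • fderiv ℝ f (avgPt s x u)) x := by
  have hfd : Continuous (fderiv ℝ f) := hf.continuous_fderiv (by norm_num)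
  have hcont : Continuous fun p : E d × (Fin d → ℝ) => (1 - s) • fderiv ℝ f (avgPt s p.1 p.2) := by
    have hc : Continuous fun p : E d × (Fin d → ℝ) => fderiv ℝ f (avgPt s p.1 p.2) :=
      hfd.comp (continuous_avgPt s)
    exact hc.const_smul (1 - s)
  have hu : ∀ x : E d, Continuous fun u : Fin d → ℝ => avgPt s x u := fun x =>
    (continuous_avgPt s).comp (by fun_prop : Continuous fun u : Fin d → ℝ => (x, u))
  obtain ⟨C, hC⟩ := ((isCompact_closedBall x 1).prod
    (isCompact_Icc : IsCompact (uI d))).exists_bound_of_continuousOn hcont.continuousOn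
  refine hasFDerivAt_integral_of_dominated_of_fderiv_le (𝕜 := ℝ)
    (F := fun x u => f (avgPt s x u))
    (F' := fun x u => (1 - s) • fderiv ℝ f (avgPt s x u)) (bound := fun _ => C)
    (Metric.closedBall_mem_nhds x one_pos) ?_ ?_ ?_ ?_ (integrable_const C) ?_
  · exact Filter.Eventually.of_forall fun y => (hf.continuous.comp (hu y)).aestronglyMeasurable
  · exact (hf.continuous.comp (hu x)).continuousOn.integrableOn_compact isCompact_Icc
  · exact ((hfd.comp (hu x)).const_smul (1 - s)).aestronglyMeasurable
  · filter_upwards [ae_restrict_mem measurableSet_Icc] with u hu y hy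
    exact hC (y, u) ⟨hy, hu⟩
  · refine Filter.Eventually.of_forall fun u y _ => ?_
    have h1 : HasFDerivAt (fun y : E d => avgPt s y u)
        ((1 - s) • ContinuousLinearMap.id ℝ (E d)) y :=
      ((hasFDerivAt_id y).const_smul (1 - s)).add_const _
    have h2 := ((hf.differentiable (by norm_num)) (avgPt s y u)).hasFDerivAt.comp y h1
    have e : (1 - s) • fderiv ℝ f (avgPt s y u) = fderiv ℝ f (avgPt s y u) ∘SL
        ((1 - s) • ContinuousLinearMap.id ℝ (E d)) := by
      ext v
      simp
    simp only [e]
    exact h2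

lemma continuous_avg_deriv {d m : ℕ} (f : E d → E m) (hf : ContDiff ℝ 1 f) (s : ℝ) :
    Continuous fun x : E d => ∫ u in uI d, (1 - s) • fderiv ℝ f (avgPt s x u) := by
  have hfd : Continuous (fderiv ℝ f) := hf.continuous_fderiv (by norm_num)
  have hcont : Continuous fun p : E d × (Fin d → ℝ) => (1 - s) • fderiv ℝ f (avgPt s p.1 p.2) := by
    have hc : Continuous fun p : E d × (Fin d → ℝ) => fderiv ℝ f (avgPt s p.1 p.2) :=
      hfd.comp (continuous_avgPt s)
    exact hc.const_smul (1 - s)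
  exact continuous_parametric_integral_of_continuous hcont isCompact_Icc

lemma zero_mem_unitCube (d : ℕ) : (0 : E d) ∈ unitCube d := fun i => by simp

lemma norm_sub_cube {d : ℕ} {x y : E d} (hx : x ∈ unitCube d) (hy : y ∈ unitCube d) :
    ‖x - y‖ ≤ Real.sqrt d := by
  have := norm_le_sqrt_mul (x - y) 1 zero_le_one fun i => by
    have h1 := hx i
    have h2 := hy i
    simp only [PiLp.sub_apply, abs_le]
    constructor <;> linarith [h1.1, h1.2, h2.1, h2.2]
  rwa [mul_one] at this

lemma chain_bound {d m : ℕ} (f : E d → E m) (s W : ℝ) (hs0 : 0 < s)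
    (hW : ∀ x ∈ unitCube d, ∀ y ∈ unitCube d, ‖x - y‖ ≤ Real.sqrt d * s →
      ‖fderiv ℝ f x - fderiv ℝ f y‖ ≤ W) (y : E d) (hy : y ∈ unitCube d) :
    ‖fderiv ℝ f y - fderiv ℝ f 0‖ ≤ ⌈1 / s⌉₊ * W := by
  set n := ⌈1 / s⌉₊ with hn
  have hn0 : 0 < n := Nat.ceil_pos.2 (by positivity)
  have hn0' : (0:ℝ) < n := by exact_mod_cast hn0
  have hns : 1 / (n:ℝ) ≤ s := by
    rw [div_le_iff₀ hn0', mul_comm, ← div_le_iff₀ hs0]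
    exact Nat.le_ceil _
  have hmem : ∀ k : ℕ, k ≤ n → ((k:ℝ) / n) • y ∈ unitCube d := by
    intro k hk i
    have h1 := hy i
    have h2 : (k:ℝ) / n ≤ 1 := div_le_one_of_le₀ (by exact_mod_cast hk) hn0'.le
    have h3 : 0 ≤ (k:ℝ) / n := by positivity
    simp only [PiLp.smul_apply, smul_eq_mul]
    constructor
    · exact mul_nonneg h3 h1.1
    · exact mul_le_one₀ h2 h1.1 h1.2
  have hk : ∀ k : ℕ, k ≤ n → ‖fderiv ℝ f (((k:ℝ) / n) • y) - fderiv ℝ f 0‖ ≤ k * W := by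
    intro k
    induction k with
    | zero => intro _; simp
    | succ k ih =>
      intro hk
      have h1 := ih (by omega)
      have h2 := hW _ (hmem (k + 1) hk) _ (hmem k (by omega)) (by
        rw [← sub_smul, norm_smul]
        have : ((k + 1 : ℕ) : ℝ) / n - k / n = 1 / n := by push_cast; ring
        rw [this, Real.norm_of_nonneg (by positivity), mul_comm]
        have h3 := norm_sub_cube hy (zero_mem_unitCube d)
        rw [sub_zero] at h3
        gcongr)
      have h4 := norm_sub_le_norm_sub_add_norm_sub (fderiv ℝ f ((((k + 1 : ℕ):ℝ) / n) • y))
        (fderiv ℝ f (((k:ℝ) / n) • y)) (fderiv ℝ f 0)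
      push_cast at *
      linarith
  have := hk n le_rfl
  rwa [div_self hn0'.ne', one_smul] at this

set_option maxHeartbeats 2000000 in
lemma smoothing {d m : ℕ} (f : E d → E m) (hf : ContDiff ℝ 1 f) (s W : ℝ) (hs0 : 0 < s)
    (hs1 : s ≤ 1) (hW0 : 0 ≤ W)
    (hW : ∀ x ∈ unitCube d, ∀ y ∈ unitCube d, ‖x - y‖ ≤ Real.sqrt d * s →
      ‖fderiv ℝ f x - fderiv ℝ f y‖ ≤ W) :
    ∃ F : E d → E m, ContDiff ℝ 1 F ∧
      (∀ x ∈ unitCube d, ‖F x - f x‖ ≤ 2 * Real.sqrt d * W ∧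
        ‖fderiv ℝ F x - fderiv ℝ f x‖ ≤ 3 * W) ∧
      (∀ᶠ N : ℕ in Filter.atTop, ∀ x ∈ unitCube d, ∀ y ∈ unitCube d,
        (∀ i, |x i - y i| ≤ 1 / N) →
          ‖fderiv ℝ F x - fderiv ℝ F y‖ ≤ (2 * W * d * ((1 - s) / s)) / N) := by
  set B := fderiv ℝ f 0 with hB
  set f0 : E d → E m := fun x => f x - B x with hf0
  have hf0c : ContDiff ℝ 1 f0 := hf.sub B.contDiff
  have hfd : ∀ x, fderiv ℝ f0 x = fderiv ℝ f x - B := fun x =>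
    (((hf.differentiable (by norm_num)) x).hasFDerivAt.sub B.hasFDerivAt).fderiv
  have hfdc : Continuous (fderiv ℝ f0) := hf0c.continuous_fderiv (by norm_num)
  have hu : ∀ x : E d, Continuous fun u : Fin d → ℝ => avgPt s x u := fun x =>
    (continuous_avgPt s).comp (by fun_prop : Continuous fun u : Fin d → ℝ => (x, u))
  set D : ℝ := ⌈1 / s⌉₊ * W with hD
  have hD0 : 0 ≤ D := by positivity
  have hsD : s * D ≤ 2 * W := by
    have h1 : (⌈1 / s⌉₊ : ℝ) < 1 / s + 1 := Nat.ceil_lt_add_one (by positivity)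
    have h2 : s * (⌈1 / s⌉₊ : ℝ) ≤ 2 := by
      calc s * (⌈1 / s⌉₊ : ℝ) ≤ s * (1 / s + 1) := by gcongr
        _ = 1 + s := by field_simp
        _ ≤ 2 := by linarith
    calc s * D = (s * (⌈1 / s⌉₊ : ℝ)) * W := by rw [hD]; ring
      _ ≤ 2 * W := by gcongr
  have hDb : ∀ y ∈ unitCube d, ‖fderiv ℝ f0 y‖ ≤ D := fun y hy => by
    rw [hfd]; exact chain_bound f s W hs0 hW y hy
  have hW' : ∀ x ∈ unitCube d, ∀ y ∈ unitCube d, ‖x - y‖ ≤ Real.sqrt d * s →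
      ‖fderiv ℝ f0 x - fderiv ℝ f0 y‖ ≤ W := fun x hx y hy hxy => by
    rw [hfd, hfd, sub_sub_sub_cancel_right]; exact hW x hx y hy hxy
  set F : E d → E m := fun x => B x + ∫ u in uI d, f0 (avgPt s x u) with hF
  have hFd : ∀ x, HasFDerivAt F
      (B + ∫ u in uI d, (1 - s) • fderiv ℝ f0 (avgPt s x u)) x := fun x =>
    B.hasFDerivAt.add (hasFDerivAt_avg f0 hf0c s x)
  have hFc : ContDiff ℝ 1 F := by
    rw [contDiff_one_iff_fderiv]
    refine ⟨fun x => (hFd x).differentiableAt, ?_⟩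
    have : fderiv ℝ F = fun x => B + ∫ u in uI d, (1 - s) • fderiv ℝ f0 (avgPt s x u) :=
      funext fun x => (hFd x).fderiv
    rw [this]
    exact continuous_const.add (continuous_avg_deriv f0 hf0c s)
  have hdist : ∀ x ∈ unitCube d, ∀ u ∈ uI d, ‖avgPt s x u - x‖ ≤ Real.sqrt d * s := by
    intro x hx u hu
    refine norm_le_sqrt_mul _ _ hs0.le fun i => ?_
    have h1 := hx i
    have h2 : 0 ≤ u i := hu.1 i
    have h3 : u i ≤ 1 := hu.2 i
    simp only [PiLp.sub_apply, avgPt_apply, abs_le]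
    constructor <;> nlinarith [h1.1, h1.2]
  refine ⟨F, hFc, fun x hx => ⟨?_, ?_⟩, ?_⟩
  · have e : F x - f x = ∫ u in uI d, (f0 (avgPt s x u) - f0 x) := by
      have i1 : IntegrableOn (fun u => f0 (avgPt s x u)) (uI d) :=
        (hf0c.continuous.comp (hu x)).continuousOn.integrableOn_compact isCompact_Icc
      rw [integral_sub i1 (integrable_const _)]
      simp only [integral_const, probReal_univ, one_smul]
      simp only [hF, hf0]
      abel
    rw [e]
    have hb : ∀ u ∈ uI d, ‖f0 (avgPt s x u) - f0 x‖ ≤ 2 * Real.sqrt d * W := by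
      intro u hu
      have h1 := (convex_unitCube d).norm_image_sub_le_of_norm_fderiv_le (𝕜 := ℝ) (f := f0)
        (fun y _ => (hf0c.differentiable (by norm_num)) y) hDb hx
        (avgPt_mem hs0.le hs1 hx hu)
      calc _ ≤ D * ‖avgPt s x u - x‖ := h1
        _ ≤ D * (Real.sqrt d * s) := by gcongr; exact hdist x hx u hu
        _ = Real.sqrt d * (s * D) := by ring
        _ ≤ Real.sqrt d * (2 * W) := by gcongr
        _ = _ := by ring
    have h3 := norm_setIntegral_le_of_norm_le_const (μ := volume) (by rw [volume_uI]; simp) hb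
    simpa [Measure.real, volume_uI] using h3
  · have e : fderiv ℝ F x - fderiv ℝ f x
        = ∫ u in uI d, ((1 - s) • fderiv ℝ f0 (avgPt s x u) - fderiv ℝ f0 x) := by
      have hc : Continuous fun u => fderiv ℝ f0 (avgPt s x u) := hfdc.comp (hu x)
      have i2 : IntegrableOn (fun u => (1 - s) • fderiv ℝ f0 (avgPt s x u)) (uI d) :=
        (hc.const_smul (1 - s)).continuousOn.integrableOn_compact isCompact_Icc
      rw [integral_sub i2 (integrable_const _)]
      simp only [integral_const, probReal_univ, one_smul]
      rw [(hFd x).fderiv, hfd x]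
      abel
    rw [e]
    have hb : ∀ u ∈ uI d, ‖(1 - s) • fderiv ℝ f0 (avgPt s x u) - fderiv ℝ f0 x‖ ≤ 3 * W := by
      intro u hu
      have hm := avgPt_mem hs0.le hs1 hx hu
      have e2 : (1 - s) • fderiv ℝ f0 (avgPt s x u) - fderiv ℝ f0 x =
          (fderiv ℝ f0 (avgPt s x u) - fderiv ℝ f0 x) - s • fderiv ℝ f0 (avgPt s x u) := by
        module
      rw [e2]
      refine (norm_sub_le _ _).trans ?_
      have h1 := hW' _ hm _ hx (hdist x hx u hu)
      have h2 : ‖s • fderiv ℝ f0 (avgPt s x u)‖ ≤ 2 * W := by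
        rw [norm_smul, Real.norm_of_nonneg hs0.le]
        exact (mul_le_mul_of_nonneg_left (hDb _ hm) hs0.le).trans hsD
      linarith
    have h3 := norm_setIntegral_le_of_norm_le_const (μ := volume) (by rw [volume_uI]; simp) hb
    simpa [Measure.real, volume_uI] using h3
  · filter_upwards [Filter.eventually_ge_atTop ⌈1 / s⌉₊, Filter.eventually_gt_atTop 0]
      with N hN hN0 x hx y hy hxy
    have hN0' : (0:ℝ) < N := by exact_mod_cast hN0
    have hNs : 1 / (N:ℝ) ≤ s := by
      rw [div_le_iff₀ hN0', mul_comm, ← div_le_iff₀ hs0]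
      exact (Nat.le_ceil _).trans (by exact_mod_cast hN)
    set q := (1 - s) / s with hq
    have hq0 : 0 ≤ q := div_nonneg (by linarith) hs0.le
    have hqs : s * q = 1 - s := by rw [hq]; field_simp
    set h : Fin d → ℝ := fun i => q * (x i - y i) with hh
    have hhb : ∀ i, |h i| ≤ q * (1 / N) := fun i => by
      rw [hh]; simp only; rw [abs_mul, abs_of_nonneg hq0]
      exact mul_le_mul_of_nonneg_left (hxy i) hq0
    have hh1 : ∀ i, |h i| ≤ 1 := fun i => by
      refine (hhb i).trans ?_
      calc q * (1 / N) ≤ q * s := by gcongr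
        _ ≤ 1 := by rw [mul_comm, hqs]; linarith
    have hshift : ∀ u, avgPt s y (u + h) = avgPt s x u := by
      intro u
      ext i
      simp only [avgPt_apply, Pi.add_apply, hh]
      rw [← hqs]; ring
    set G : (Fin d → ℝ) → (E d →L[ℝ] E m) :=
      fun u => (1 - s) • fderiv ℝ f0 (avgPt s y u) with hG
    have hGc : Continuous G := by
      have hc : Continuous fun u => fderiv ℝ f0 (avgPt s y u) := hfdc.comp (hu y)
      exact hc.const_smul (1 - s)
    set z : Fin d → ℝ := fun i => max 0 (h i) with hz
    have hzI : z ∈ uI d := ⟨fun i => le_max_left _ _,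
      fun i => max_le zero_le_one ((le_abs_self _).trans (hh1 i))⟩
    have hscale : ∀ T : E d →L[ℝ] E m, ‖T‖ ≤ W → ‖(1 - s) • T‖ ≤ W := by
      intro T hT
      rw [norm_smul, Real.norm_of_nonneg (by linarith)]
      calc (1 - s) * ‖T‖ ≤ 1 * ‖T‖ := by gcongr; linarith
        _ ≤ W := by rw [one_mul]; exact hT
    have key := integral_shift G hGc h hh1 (G z) W hW0
      (fun u huI => by
        simp only [hG]
        have es : (1 - s) • fderiv ℝ f0 (avgPt s y u) - (1 - s) • fderiv ℝ f0 (avgPt s y z)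
          = (1 - s) • (fderiv ℝ f0 (avgPt s y u) - fderiv ℝ f0 (avgPt s y z)) := by module
        rw [es]
        refine hscale _ (hW' _ (avgPt_mem hs0.le hs1 hy huI) _ (avgPt_mem hs0.le hs1 hy hzI) ?_)
        refine norm_le_sqrt_mul _ _ hs0.le fun i => ?_
        have a1 : 0 ≤ u i := huI.1 i
        have a2 : u i ≤ 1 := huI.2 i
        have a3 : 0 ≤ z i := hzI.1 i
        have a4 : z i ≤ 1 := hzI.2 i
        simp only [PiLp.sub_apply, avgPt_apply, abs_le]
        constructor <;> nlinarith)
      (fun u huI => by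
        simp only [hG]
        have es : (1 - s) • fderiv ℝ f0 (avgPt s y (u + h)) - (1 - s) • fderiv ℝ f0 (avgPt s y z)
          = (1 - s) • (fderiv ℝ f0 (avgPt s y (u + h)) - fderiv ℝ f0 (avgPt s y z)) := by module
        rw [es]
        have hmx := avgPt_mem hs0.le hs1 hx huI
        rw [← hshift] at hmx
        refine hscale _ (hW' _ hmx _ (avgPt_mem hs0.le hs1 hy hzI) ?_)
        refine norm_le_sqrt_mul _ _ hs0.le fun i => ?_
        have a1 : 0 ≤ u i := huI.1 i
        have a2 : u i ≤ 1 := huI.2 i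
        have a3 : h i ≤ z i := le_max_right _ _
        have a4 : z i ≤ 1 + h i :=
          max_le (by linarith [(abs_le.1 (hh1 i)).1]) (by linarith)
        simp only [PiLp.sub_apply, avgPt_apply, abs_le, Pi.add_apply]
        constructor <;> nlinarith)
    have e : fderiv ℝ F x - fderiv ℝ F y
        = (∫ u in uI d, G (u + h)) - ∫ u in uI d, G u := by
      rw [(hFd x).fderiv, (hFd y).fderiv]
      simp only [hG, hshift]
      abel
    rw [e]
    refine key.trans ?_
    calc 2 * W * ∑ i, |h i| ≤ 2 * W * ∑ i : Fin d, q * (1 / N) := by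
          gcongr with i; exact hhb i
      _ = _ := by simp; ring

lemma isCompact_unitCube (d : ℕ) : IsCompact (unitCube d) := by
  have : unitCube d = (fun u : Fin d → ℝ => (WithLp.toLp 2 u : E d)) '' (uI d) := by
    ext x
    constructor
    · intro hx
      exact ⟨fun i => x i, ⟨fun i => (hx i).1, fun i => (hx i).2⟩, rfl⟩
    · rintro ⟨u, hu, rfl⟩ i
      exact ⟨hu.1 i, hu.2 i⟩
  rw [this]
  exact isCompact_Icc.image (PiLp.continuous_toLp 2 _)

lemma le_omegaC1 {d m : ℕ} (f : E d → E m) (hf : ContDiff ℝ 1 f) (δ : ℝ) (x y : E d)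
    (hx : x ∈ unitCube d) (hy : y ∈ unitCube d) (hxy : ‖x - y‖ ≤ δ) :
    ‖fderiv ℝ f x - fderiv ℝ f y‖ ≤ omegaC1 f (unitCube d) δ := by
  obtain ⟨C, hC⟩ := (isCompact_unitCube d).exists_bound_of_continuousOn
    (hf.continuous_fderiv (by norm_num)).continuousOn
  refine le_csSup ⟨C + C, ?_⟩ ⟨x, hx, y, hy, hxy, rfl⟩
  rintro r ⟨a, ha, b, hb, _, rfl⟩
  exact (norm_sub_le _ _).trans (add_le_add (hC a ha) (hC b hb))

end

set_option maxHeartbeats 2000000 in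
/-- upper bound on `N_f(ε)` in terms of the inverse of `β_f`.
Since `β_f` is strictly increasing, `β_f⁻¹(ε) = δ` exactly when `β_f(δ) = ε`. -/
theorem statement2 (d m : ℕ) (hm : 1 ≤ m) (hmd : m ≤ d)
    (f : E d → E m) (hf : ContDiff ℝ 1 f)
    (hnc : ¬ ∀ x ∈ unitCube d, ∀ y ∈ unitCube d, f x = f y)
    (ε : ℝ) (hε : 0 < ε) (δ : ℝ) (hδ : 0 < δ) (hβ : betaf f δ = ε) :
    Nf f ε ≤ ENNReal.ofReal ((d : ℝ) * 2 ^ (2*m + d - 1) * (d.factorial : ℝ) * (1 / δ)) := by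
  have hd1 : 1 ≤ d := hm.trans hmd
  have hdR : (1:ℝ) ≤ d := by exact_mod_cast hd1
  have hd0 : (0:ℝ) < d := by linarith
  have hsq : (1:ℝ) ≤ Real.sqrt d := by rw [Real.one_le_sqrt]; exact hdR
  have hmR : (m:ℝ) ≤ d := by exact_mod_cast hmd
  set W := omegaC1 f (unitCube d) (Real.sqrt d * δ) with hWdef
  set P : ℝ := (d:ℝ) ^ d * Real.sqrt d * ((d:ℝ) + 1) ^ 4 with hP
  have hrpow : (d:ℝ) ^ ((d:ℝ) + 1/2) = (d:ℝ) ^ d * Real.sqrt d := by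
    rw [Real.rpow_add hd0, Real.rpow_natCast, Real.sqrt_eq_rpow]
  have hεeq : ε = W * (1 + Real.sqrt d * δ + 4 * P) := by
    rw [← hβ, betaf, hrpow, hP]; ring
  have hpos : 0 < 1 + Real.sqrt d * δ + 4 * P := by positivity
  have hW0 : 0 < W := by
    by_contra hcon
    have : W * (1 + Real.sqrt d * δ + 4 * P) ≤ 0 :=
      mul_nonpos_of_nonpos_of_nonneg (not_lt.1 hcon) hpos.le
    linarith
  have hdd : (1:ℝ) ≤ (d:ℝ) ^ d := one_le_pow₀ hdR
  have hd4 : (16:ℝ) ≤ ((d:ℝ) + 1) ^ 4 := by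
    calc (16:ℝ) = 2 ^ 4 := by norm_num
      _ ≤ _ := pow_le_pow_left₀ (by norm_num) (by linarith) 4
  have hP16 : 16 * Real.sqrt d ≤ P := by
    calc 16 * Real.sqrt d = 1 * Real.sqrt d * 16 := by ring
      _ ≤ P := by rw [hP]; gcongr
  have hεge : 4 * (W * P) ≤ ε := by
    rw [hεeq]
    have : 0 ≤ W * (1 + Real.sqrt d * δ) := by positivity
    linarith
  have hWP : 16 * Real.sqrt d * W ≤ W * P := by
    rw [mul_comm W P]; gcongr
  have hsW : W ≤ Real.sqrt d * W := le_mul_of_one_le_left hW0.le hsq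
  set s := min δ 1 with hs
  have hs0 : 0 < s := lt_min hδ one_pos
  have hs1 : s ≤ 1 := min_le_right _ _
  have hsδ : (1 - s) / s ≤ 1 / δ := by
    rcases le_total δ 1 with h | h
    · rw [hs, min_eq_left h]; gcongr; linarith
    · rw [hs, min_eq_right h]; simp; positivity
  have hss0 : 0 ≤ (1 - s) / s := div_nonneg (by linarith) hs0.le
  obtain ⟨F, hF, hFf, hFL⟩ := smoothing f hf s W hs0 hs1 hW0.le fun x hx y hy hxy =>
    le_omegaC1 f hf _ x y hx hy (hxy.trans (by gcongr; exact min_le_left _ _))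
  set r : ℝ := 2 * W * (d:ℝ) ^ (d - 1) * ((d:ℝ) + 1) ^ 4 with hr
  have hr0 : 0 < r := by positivity
  have hdpow : (d:ℝ) ^ (d - 1) * d = (d:ℝ) ^ d := by
    rw [← pow_succ]; congr 1; omega
  have hrd : r * d * Real.sqrt d = 2 * (W * P) := by
    rw [hr, hP, ← hdpow]; ring
  have hrd' : r * d ≤ 2 * (W * P) := by
    rw [← hrd]; exact le_mul_of_one_le_right (by positivity) hsq
  obtain ⟨A, hA, hcrit⟩ := core hm hmd F hF r _ hr0
    (by positivity : 0 ≤ 2 * W * d * ((1 - s) / s)) hFL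
  clear_value r s W P
  have hAn := matLin_norm hmd A hA
  refine le_trans (sInf_le ⟨fun x => F x + r • matLin A x,
    hF.add ((matLin A).contDiff.const_smul r), fun x hx => ⟨?_, ?_⟩, rfl⟩) (hcrit.trans ?_)
  · have h1 := (hFf x hx).1
    have h2 : ‖r • matLin A x‖ ≤ 2 * (W * P) := by
      rw [norm_smul, Real.norm_of_nonneg hr0.le]
      have h3 := norm_sub_cube hx (zero_mem_unitCube d)
      rw [sub_zero] at h3
      have h4 := (matLin A).le_opNorm x
      have : ‖matLin A x‖ ≤ d * Real.sqrt d := h4.trans (by gcongr)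
      calc r * ‖matLin A x‖ ≤ r * (d * Real.sqrt d) := mul_le_mul_of_nonneg_left this hr0.le
        _ = 2 * (W * P) := by rw [← hrd, mul_assoc]
    have e : F x + r • matLin A x - f x = (F x - f x) + r • matLin A x := by abel
    simp only [e]
    refine (norm_add_le _ _).trans ?_
    linarith
  · have h1 := (hFf x hx).2
    have e : fderiv ℝ (fun x => F x + r • matLin A x) x = fderiv ℝ F x + r • matLin A :=
      (((hF.differentiable (by norm_num)) x).hasFDerivAt.add
        ((matLin A).hasFDerivAt.const_smul r)).fderiv
    have h2 : ‖r • matLin A‖ ≤ 2 * (W * P) := by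
      rw [norm_smul, Real.norm_of_nonneg hr0.le]
      exact le_trans (mul_le_mul_of_nonneg_left hAn hr0.le) hrd'
    have e2 : fderiv ℝ F x + r • matLin A - fderiv ℝ f x
        = (fderiv ℝ F x - fderiv ℝ f x) + r • matLin A := by abel
    rw [e, e2]
    refine (norm_add_le _ _).trans ?_
    linarith
  · apply ENNReal.ofReal_le_ofReal
    have hs2 : Real.sqrt d ^ (d - 1) ≤ (d:ℝ) ^ (d - 1) := by
      apply pow_le_pow_left₀ (by positivity)
      rw [Real.sqrt_le_left (by positivity)]
      nlinarith
    have hm2 : (m:ℝ) ^ 2 * d ^ 2 ≤ ((d:ℝ) + 1) ^ 4 := by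
      calc (m:ℝ) ^ 2 * d ^ 2 ≤ (d:ℝ) ^ 2 * d ^ 2 := by gcongr
        _ = (d:ℝ) ^ 4 := by ring
        _ ≤ _ := by gcongr; linarith
    have hleft : 2 * (m:ℝ) ^ 2 * d * (2 * W * d * ((1 - s) / s)) * Real.sqrt d ^ (d - 1) / r
        ≤ 2 * (1 / δ) := by
      rw [div_le_iff₀ hr0]
      calc 2 * (m:ℝ) ^ 2 * d * (2 * W * d * ((1 - s) / s)) * Real.sqrt d ^ (d - 1)
          = 4 * W * ((m:ℝ) ^ 2 * d ^ 2) * ((1 - s) / s) * Real.sqrt d ^ (d - 1) := by ring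
        _ ≤ 4 * W * (((d:ℝ) + 1) ^ 4) * (1 / δ) * (d:ℝ) ^ (d - 1) := by gcongr
        _ = 2 * (1 / δ) * r := by rw [hr]; ring
    refine hleft.trans ?_
    have h2 : (2:ℝ) ≤ 2 ^ (2 * m + d - 1) := by
      calc (2:ℝ) = 2 ^ 1 := by norm_num
        _ ≤ _ := pow_le_pow_right₀ (by norm_num) (by omega)
    have h3 : (1:ℝ) ≤ d.factorial := by exact_mod_cast Nat.factorial_pos d
    have h4 : (2:ℝ) ≤ d * 2 ^ (2 * m + d - 1) * d.factorial := by
      calc (2:ℝ) = 1 * 2 * 1 := by norm_num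
        _ ≤ _ := by gcongr
    gcongr
end
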